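/- arXiv:1606.03131 — 2 statements merged into one kernel-verified Lean document; each statement's English description precedes it below -/
import Mathlib

section
/- Let A(λ) = ∫_0^∞ {t}{λt}/t² dt for λ > 0. Then as λ → 0⁺, A(λ) = (λ/2) log(1/λ) + ((1 + A(1))/2) λ + O(λ²). -/
open MeasureTheory Filter Asymptotics

/-- `A(λ) = ∫_0^∞ {t}{λt}/t² dt`. -/
noncomputable def Afn (l : ℝ) : ℝ :=
  ∫ t in Set.Ioi (0:ℝ), Int.fract t * Int.fract (l * t) / t ^ 2

/-- The continuous `1`-periodic antiderivative of `{t} - 1/2` vanishing at the integers. -/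
noncomputable def sawtoothPrimitive (t : ℝ) : ℝ :=
  (Int.fract t ^ 2 - Int.fract t) / 2

lemma continuous_sawtoothPrimitive : Continuous sawtoothPrimitive := by
  have h : ContinuousOn (fun x : ℝ => (x ^ 2 - x) / 2) (Set.Icc 0 1) := by fun_prop
  exact h.comp_fract'' (by norm_num)

lemma abs_sawtoothPrimitive_le (t : ℝ) : |sawtoothPrimitive t| ≤ 1 / 8 := by
  have h0 := Int.fract_nonneg t
  have h1 := (Int.fract_lt_one t).le
  unfold sawtoothPrimitive
  rw [abs_le]
  constructor <;> nlinarith [sq_nonneg (Int.fract t - 1 / 2)]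

lemma hasDerivWithinAt_sawtoothPrimitive (x : ℝ) :
    HasDerivWithinAt sawtoothPrimitive (Int.fract x - 1 / 2) (Set.Ici x) x := by
  have h : HasDerivAt (fun t : ℝ => ((t - ⌊x⌋) ^ 2 - (t - ⌊x⌋)) / 2) (Int.fract x - 1 / 2) x := by
    have := (((hasDerivAt_id x).sub_const (⌊x⌋ : ℝ)).pow 2).sub
      ((hasDerivAt_id x).sub_const (⌊x⌋ : ℝ)) |>.div_const 2
    refine this.congr_deriv ?_
    rw [← Int.self_sub_floor]
    norm_num
    ring
  refine h.hasDerivWithinAt.congr_of_eventuallyEq ?_ 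
    (by rw [sawtoothPrimitive, ← Int.self_sub_floor])
  filter_upwards [Ico_mem_nhdsGE (Int.lt_floor_add_one x)] with t ht
  have : ⌊t⌋ = ⌊x⌋ := Int.floor_eq_iff.2 ⟨(Int.floor_le x).trans ht.1, ht.2⟩
  rw [sawtoothPrimitive, ← Int.self_sub_floor, this]

lemma hasDerivWithinAt_sawtoothPrimitive_mul {c : ℝ} (hc : 0 < c) (x : ℝ) :
    HasDerivWithinAt (fun s => sawtoothPrimitive (c * s) / c) (Int.fract (c * x) - 1 / 2)
      (Set.Ioi x) x := by
  have h1 : HasDerivWithinAt (fun s => c * s) c (Set.Ioi x) x := by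
    simpa using ((hasDerivAt_id x).const_mul c).hasDerivWithinAt
  have h := (hasDerivWithinAt_sawtoothPrimitive (c * x)).comp x h1
    (fun s hs => mul_le_mul_of_nonneg_left (le_of_lt hs) hc.le)
  have h2 := h.div_const c
  rwa [mul_div_cancel_right₀ _ hc.ne'] at h2

lemma abs_sawtoothPrimitive_mul_div_le {c : ℝ} (hc : 0 < c) (s : ℝ) :
    |sawtoothPrimitive (c * s) / c| ≤ 1 / (8 * c) := by
  rw [abs_div, abs_of_pos hc, div_le_div_iff₀ hc (by positivity)]
  nlinarith [abs_sawtoothPrimitive_le (c * s)]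

lemma intervalIntegrable_fract_mul_sub (c a b : ℝ) :
    IntervalIntegrable (fun s => Int.fract (c * s) - 1 / 2) volume a b := by
  refine (intervalIntegrable_const (c := (1 : ℝ))).mono_fun
    ((measurable_fract.comp (measurable_const_mul c)).sub_const _).aestronglyMeasurable
    (ae_of_all _ fun s => ?_)
  have h0 := Int.fract_nonneg (c * s)
  have h1 := (Int.fract_lt_one (c * s)).le
  simp only [Real.norm_eq_abs, abs_one, abs_le]
  constructor <;> linarith

lemma integral_mul_fract_sub {c : ℝ} (hc : 0 < c) {a b : ℝ} {u u' : ℝ → ℝ}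
    (hu : ∀ x ∈ Set.uIcc a b, HasDerivAt u (u' x) x) (hu' : ContinuousOn u' (Set.uIcc a b)) :
    ∫ s in a..b, u s * (Int.fract (c * s) - 1 / 2) =
      u b * (sawtoothPrimitive (c * b) / c) - u a * (sawtoothPrimitive (c * a) / c) -
        ∫ s in a..b, u' s * (sawtoothPrimitive (c * s) / c) := by
  refine intervalIntegral.integral_mul_deriv_eq_deriv_mul_of_hasDeriv_right
    (v := fun s => sawtoothPrimitive (c * s) / c)
    (fun x hx => (hu x hx).continuousAt.continuousWithinAt) ?_
    (fun x hx => (hu x (Set.Ioo_subset_Icc_self hx)).hasDerivWithinAt)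
    (fun x _ => hasDerivWithinAt_sawtoothPrimitive_mul hc x)
    hu'.intervalIntegrable (intervalIntegrable_fract_mul_sub c a b)
  exact ((continuous_sawtoothPrimitive.comp (continuous_const.mul continuous_id)).div_const
    c).continuousOn

lemma integrableOn_Ioi_div_sq {f : ℝ → ℝ} (hf : Measurable f) (hb : ∀ t, |f t| ≤ 1) {a : ℝ}
    (ha : 0 < a) : IntegrableOn (fun t => f t / t ^ 2) (Set.Ioi a) := by
  have h := integrableOn_Ioi_rpow_of_lt (by norm_num : (-2 : ℝ) < -1) ha
  refine h.mono' (hf.div (measurable_id.pow_const 2)).aestronglyMeasurable ?_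
  filter_upwards [ae_restrict_mem measurableSet_Ioi] with t ht
  have ht0 : 0 < t := ha.trans ht
  rw [Real.rpow_neg ht0.le, Real.norm_eq_abs, abs_div, abs_of_pos (pow_pos ht0 2), div_eq_mul_inv]
  norm_cast
  exact mul_le_of_le_one_left (by positivity) (hb t)

lemma abs_integral_Ioi_sawtoothPrimitive_le {a : ℝ} (ha : 0 < a) :
    |∫ t in Set.Ioi a, sawtoothPrimitive t / t ^ 2| ≤ 1 / (8 * a) := by
  have h := (integrableOn_Ioi_rpow_of_lt (by norm_num : (-2 : ℝ) < -1) ha).const_mul (1 / 8)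
  refine (norm_integral_le_of_norm_le (f := fun t => sawtoothPrimitive t / t ^ 2)
    h ?_).trans_eq ?_
  · filter_upwards [ae_restrict_mem measurableSet_Ioi] with t ht
    have ht0 : 0 < t := ha.trans ht
    rw [Real.rpow_neg ht0.le, Real.norm_eq_abs, abs_div, abs_of_pos (pow_pos ht0 2),
      div_eq_mul_inv]
    norm_cast
    exact mul_le_mul_of_nonneg_right (abs_sawtoothPrimitive_le t) (by positivity)
  · rw [integral_const_mul, integral_Ioi_rpow_of_lt (by norm_num) ha]
    norm_num [Real.rpow_neg_one]
    ring

lemma measurable_fract_mul_fract_sub (c : ℝ) :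
    Measurable fun t : ℝ => Int.fract t * (Int.fract (c * t) - 1 / 2) :=
  measurable_fract.mul ((measurable_fract.comp (measurable_const_mul c)).sub_const _)

lemma abs_fract_mul_fract_sub_le (c t : ℝ) :
    |Int.fract t * (Int.fract (c * t) - 1 / 2)| ≤ 1 := by
  rw [abs_mul, abs_of_nonneg (Int.fract_nonneg t)]
  refine mul_le_one₀ (Int.fract_lt_one t).le (abs_nonneg _) ?_
  have h0 := Int.fract_nonneg (c * t)
  have h1 := (Int.fract_lt_one (c * t)).le
  rw [abs_le]
  constructor <;> linarith

lemma abs_integral_fract_mul_fract_sub_block_le {c : ℝ} (hc : 0 < c) {n : ℕ} (hn : 1 ≤ n) :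
    |∫ s in (n : ℝ)..(n + 1 : ℕ), Int.fract s * (Int.fract (c * s) - 1 / 2) / s ^ 2| ≤
      1 / c * (1 / n - 1 / (n + 1 : ℕ)) := by
  have hn' : (1 : ℝ) ≤ n := by exact_mod_cast hn
  push_cast
  have hle : (n : ℝ) ≤ n + 1 := by linarith
  have hpos : ∀ s ∈ Set.uIcc (n : ℝ) (n + 1), 0 < s := fun s hs => by
    rw [Set.uIcc_of_le hle] at hs
    linarith [hs.1]
  have hcongr : ∫ s in (n : ℝ)..(n + 1), Int.fract s * (Int.fract (c * s) - 1 / 2) / s ^ 2 =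
      ∫ s in (n : ℝ)..(n + 1), (s - n) / s ^ 2 * (Int.fract (c * s) - 1 / 2) := by
    refine intervalIntegral.integral_congr_Ioo_of_le hle fun s hs => ?_
    have : ⌊s⌋ = (n : ℤ) := Int.floor_eq_iff.2 ⟨by exact_mod_cast hs.1.le, by exact_mod_cast hs.2⟩
    have hf : Int.fract s = s - n := by rw [← Int.self_sub_floor, this]; simp
    simp only [hf]
    ring
  have hderiv : ∀ s ∈ Set.uIcc (n : ℝ) (n + 1), HasDerivAt (fun s : ℝ => (s - n) / s ^ 2)
      ((2 * n - s) / s ^ 3) s := fun s hs => by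
    have hs0 := (hpos s hs).ne'
    refine (((hasDerivAt_id s).sub_const (n : ℝ)).div (hasDerivAt_pow 2 s)
      (pow_ne_zero 2 hs0)).congr_deriv ?_
    simp only [id]
    field_simp
    push_cast
    ring
  have hcont : ContinuousOn (fun s : ℝ => (2 * n - s) / s ^ 3) (Set.uIcc (n : ℝ) (n + 1)) :=
    ContinuousOn.div (by fun_prop) (by fun_prop) fun s hs => pow_ne_zero 3 (hpos s hs).ne'
  rw [hcongr, integral_mul_fract_sub hc hderiv hcont]
  have hbound : ‖∫ s in (n : ℝ)..(n + 1), (2 * n - s) / s ^ 3 * (sawtoothPrimitive (c * s) / c)‖ ≤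
      1 / n ^ 2 * (1 / (8 * c)) * |(n + 1 : ℝ) - n| := by
    refine intervalIntegral.norm_integral_le_of_norm_le_const fun s hs => ?_
    rw [Set.uIoc_of_le hle] at hs
    have hs0 : 0 < s := by linarith [hs.1]
    rw [norm_mul, Real.norm_eq_abs, Real.norm_eq_abs]
    refine mul_le_mul ?_ (abs_sawtoothPrimitive_mul_div_le hc s) (abs_nonneg _) (by positivity)
    rw [abs_div, abs_of_pos (pow_pos hs0 3), div_le_div_iff₀ (by positivity) (by positivity)]
    have h1 : |2 * n - s| ≤ s := by
      rw [abs_le]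
      constructor <;> linarith [hs.1]
    have h2 : (n : ℝ) ^ 2 ≤ s ^ 2 := pow_le_pow_left₀ (by linarith) hs.1.le 2
    nlinarith [mul_le_mul h1 h2 (by positivity) hs0.le]
  rw [Real.norm_eq_abs, add_sub_cancel_left, abs_one, mul_one] at hbound
  have hend : |((n + 1 : ℝ) - n) / (n + 1) ^ 2 * (sawtoothPrimitive (c * (n + 1)) / c)| ≤
      1 / n ^ 2 * (1 / (8 * c)) := by
    rw [add_sub_cancel_left, abs_mul]
    refine mul_le_mul ?_ (abs_sawtoothPrimitive_mul_div_le hc _) (abs_nonneg _) (by positivity)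
    rw [abs_of_nonneg (by positivity)]
    gcongr
  rw [sub_self, zero_div, zero_mul, sub_zero]
  refine ((abs_sub _ _).trans (add_le_add hend hbound)).trans ?_
  have h3 : 1 / (n : ℝ) - 1 / (n + 1) = 1 / (n * (n + 1)) := by
    field_simp
    ring
  have h4 : (1 : ℝ) / n ^ 2 ≤ 2 * (1 / (n * (n + 1))) := by
    rw [mul_one_div, div_le_div_iff₀ (by positivity) (by positivity)]
    nlinarith
  rw [h3]
  have h5 : 0 < 1 / c := by positivity
  have h6 : 1 / (8 * c) = 1 / c / 8 := by field_simp
  rw [h6]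
  have h7 : 0 < 1 / ((n : ℝ) * (n + 1)) := by positivity
  nlinarith [mul_le_mul_of_nonneg_right h4 h5.le, mul_pos h5 h7]

lemma abs_integral_Ioi_fract_mul_fract_sub_le {c : ℝ} (hc : 0 < c) :
    |∫ s in Set.Ioi (1 : ℝ), Int.fract s * (Int.fract (c * s) - 1 / 2) / s ^ 2| ≤ 1 / c := by
  have hint := integrableOn_Ioi_div_sq (measurable_fract_mul_fract_sub c)
    (abs_fract_mul_fract_sub_le c) one_pos
  have hlim := (intervalIntegral_tendsto_integral_Ioi 1 hint
    (tendsto_natCast_atTop_atTop (R := ℝ))).abs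
  refine le_of_tendsto hlim ?_
  filter_upwards [eventually_ge_atTop 1] with m hm
  have key : |∫ s in (1 : ℝ)..m, Int.fract s * (Int.fract (c * s) - 1 / 2) / s ^ 2| ≤
      1 / c * (1 - 1 / m) := by
    induction m, hm using Nat.le_induction with
    | base => simp
    | succ n hn ih =>
      have hn' : (1 : ℝ) ≤ n := by exact_mod_cast hn
      have hi : ∀ a b : ℝ, 1 ≤ a → a ≤ b → IntervalIntegrable
          (fun s => Int.fract s * (Int.fract (c * s) - 1 / 2) / s ^ 2) volume a b :=
        fun a b ha hab => (intervalIntegrable_iff_integrableOn_Ioc_of_le hab).2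
          (hint.mono_set fun x hx => lt_of_le_of_lt ha hx.1)
      rw [← intervalIntegral.integral_add_adjacent_intervals (hi 1 n le_rfl hn')
        (hi n (n + 1 : ℕ) hn' (by push_cast; linarith))]
      refine (abs_add_le _ _).trans
        ((add_le_add ih (abs_integral_fract_mul_fract_sub_block_le hc hn)).trans_eq ?_)
      ring
  refine key.trans (mul_le_of_le_one_right (by positivity) ?_)
  have : (0 : ℝ) ≤ 1 / m := by positivity
  linarith

lemma measurable_fract_mul_fract (l : ℝ) :
    Measurable fun t : ℝ => Int.fract t * Int.fract (l * t) :=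
  measurable_fract.mul (measurable_fract.comp (measurable_const_mul l))

lemma abs_fract_mul_fract_le (l t : ℝ) : |Int.fract t * Int.fract (l * t)| ≤ 1 := by
  rw [abs_of_nonneg (mul_nonneg (Int.fract_nonneg _) (Int.fract_nonneg _))]
  exact mul_le_one₀ (Int.fract_lt_one t).le (Int.fract_nonneg _) (Int.fract_lt_one _).le

lemma Afn_eq_add_integral_Ioi_one {l : ℝ} (hl : 0 < l) (hl1 : l ≤ 1) :
    Afn l = l + ∫ t in Set.Ioi (1 : ℝ), Int.fract t * Int.fract (l * t) / t ^ 2 := by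
  have heq : Set.EqOn (fun _ => l) (fun t : ℝ => Int.fract t * Int.fract (l * t) / t ^ 2)
      (Set.Ioo 0 1) := fun t ht => by
    have h1 : Int.fract t = t := Int.fract_eq_self.2 ⟨ht.1.le, ht.2⟩
    have h2 : Int.fract (l * t) = l * t :=
      Int.fract_eq_self.2 ⟨(mul_pos hl ht.1).le, by nlinarith [ht.1, ht.2]⟩
    have := ht.1.ne'
    simp only [h1, h2]
    field_simp
  have hii : IntervalIntegrable (fun t : ℝ => Int.fract t * Int.fract (l * t) / t ^ 2)
      volume 0 1 := by
    rw [intervalIntegrable_iff_integrableOn_Ioo_of_le zero_le_one]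
    exact (integrableOn_const (by simp)).congr_fun heq measurableSet_Ioo
  rw [Afn, ← intervalIntegral.integral_interval_add_Ioi' hii
    (integrableOn_Ioi_div_sq (measurable_fract_mul_fract l) (abs_fract_mul_fract_le l) one_pos),
    ← intervalIntegral.integral_congr_Ioo_of_le zero_le_one heq]
  simp

lemma integrableOn_Ioi_fract_div_sq {a : ℝ} (ha : 0 < a) :
    IntegrableOn (fun t : ℝ => Int.fract t / t ^ 2) (Set.Ioi a) :=
  integrableOn_Ioi_div_sq measurable_fract
    (fun t => by rw [Int.abs_fract]; exact (Int.fract_lt_one t).le) ha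

lemma integrableOn_Ioi_sawtoothPrimitive_div_sq {a : ℝ} (ha : 0 < a) :
    IntegrableOn (fun t : ℝ => sawtoothPrimitive t / t ^ 2) (Set.Ioi a) :=
  integrableOn_Ioi_div_sq continuous_sawtoothPrimitive.measurable
    (fun t => (abs_sawtoothPrimitive_le t).trans (by norm_num)) ha

lemma Afn_one_eq : Afn 1 = 1 + (2 * (∫ t in Set.Ioi (1 : ℝ), sawtoothPrimitive t / t ^ 2) +
    ∫ t in Set.Ioi (1 : ℝ), Int.fract t / t ^ 2) := by
  rw [Afn_eq_add_integral_Ioi_one one_pos le_rfl, ← integral_const_mul, ← integral_add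
    ((integrableOn_Ioi_sawtoothPrimitive_div_sq one_pos).const_mul 2)
    (integrableOn_Ioi_fract_div_sq one_pos)]
  congr 2
  ext t
  rw [sawtoothPrimitive, one_mul]
  ring

lemma integral_fract_div_eq {b : ℝ} (hb : 1 ≤ b) :
    ∫ t in (1 : ℝ)..b, Int.fract t / t = Real.log b / 2 + sawtoothPrimitive b / b +
      ∫ t in (1 : ℝ)..b, sawtoothPrimitive t / t ^ 2 := by
  have hpos : ∀ s ∈ Set.uIcc 1 b, s ≠ 0 := fun s hs => by
    rw [Set.uIcc_of_le hb] at hs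
    linarith [hs.1]
  have hcont : ContinuousOn (fun s : ℝ => s⁻¹) (Set.uIcc 1 b) := continuousOn_inv₀.mono hpos
  have h := integral_mul_fract_sub one_pos (fun s hs => hasDerivAt_inv (hpos s hs))
    (((continuousOn_pow 2).inv₀ fun s hs => pow_ne_zero 2 (hpos s hs)).neg)
  have h0 : sawtoothPrimitive 1 = 0 := by simp [sawtoothPrimitive]
  simp only [one_mul, div_one, h0, mul_zero, sub_zero, neg_mul, intervalIntegral.integral_neg,
    sub_neg_eq_add] at h
  have hlog : ∫ t in (1 : ℝ)..b, 1 / 2 * t⁻¹ = Real.log b / 2 := by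
    rw [intervalIntegral.integral_const_mul, integral_inv_of_pos one_pos (by linarith), div_one]
    ring
  have hI := (intervalIntegrable_fract_mul_sub 1 1 b).continuousOn_mul hcont
  simp only [one_mul] at hI
  calc ∫ t in (1 : ℝ)..b, Int.fract t / t
      = ∫ t in (1 : ℝ)..b, (1 / 2 * t⁻¹ + t⁻¹ * (Int.fract t - 1 / 2)) := by
        congr 1
        ext t
        ring
    _ = _ := by
        rw [intervalIntegral.integral_add (hcont.intervalIntegrable.const_mul _) hI, hlog, h]
        simp only [div_eq_mul_inv, mul_comm]
        ring

lemma integral_Ioi_fract_mul_fract_eq {l : ℝ} (hl : 0 < l) :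
    ∫ t in Set.Ioi l⁻¹, Int.fract t * Int.fract (l * t) / t ^ 2 =
      l * (1 / 2 * (∫ t in Set.Ioi (1 : ℝ), Int.fract t / t ^ 2) +
        ∫ s in Set.Ioi (1 : ℝ), Int.fract s * (Int.fract (l⁻¹ * s) - 1 / 2) / s ^ 2) := by
  have h := integral_comp_mul_left_Ioi
    (fun t => Int.fract t * Int.fract (l * t) / t ^ 2) 1 (inv_pos.2 hl)
  rw [mul_one, inv_inv, smul_eq_mul] at h
  have h2 : ∫ t in Set.Ioi l⁻¹, Int.fract t * Int.fract (l * t) / t ^ 2 =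
      l⁻¹ * ∫ x in Set.Ioi (1 : ℝ),
        Int.fract (l⁻¹ * x) * Int.fract (l * (l⁻¹ * x)) / (l⁻¹ * x) ^ 2 := by
    rw [h, inv_mul_cancel_left₀ hl.ne']
  rw [h2, ← integral_const_mul, ← integral_const_mul, ← integral_add
    ((integrableOn_Ioi_fract_div_sq one_pos).const_mul _)
    (integrableOn_Ioi_div_sq (measurable_fract_mul_fract_sub _)
      (abs_fract_mul_fract_sub_le _) one_pos), ← integral_const_mul]
  congr 1
  ext s
  rw [mul_inv_cancel_left₀ hl.ne', mul_pow]
  field_simp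
  ring

lemma Afn_sub_eq {l : ℝ} (hl : 0 < l) (hl1 : l < 1) :
    Afn l - (l / 2 * Real.log (1 / l) + (1 + Afn 1) / 2 * l) =
      l * (sawtoothPrimitive l⁻¹ / l⁻¹ - (∫ t in Set.Ioi l⁻¹, sawtoothPrimitive t / t ^ 2) +
        ∫ s in Set.Ioi (1 : ℝ), Int.fract s * (Int.fract (l⁻¹ * s) - 1 / 2) / s ^ 2) := by
  have hN : 1 ≤ l⁻¹ := (one_le_inv₀ hl).2 hl1.le
  have hN0 : 0 < l⁻¹ := inv_pos.2 hl
  have hmid : ∫ t in (1 : ℝ)..l⁻¹, Int.fract t * Int.fract (l * t) / t ^ 2 =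
      l * ∫ t in (1 : ℝ)..l⁻¹, Int.fract t / t := by
    rw [← intervalIntegral.integral_const_mul]
    refine intervalIntegral.integral_congr_Ioo_of_le hN fun t ht => ?_
    have ht0 : 0 < t := one_pos.trans ht.1
    have h2 : Int.fract (l * t) = l * t := Int.fract_eq_self.2
      ⟨(mul_pos hl ht0).le, by simpa [hl.ne'] using mul_lt_mul_of_pos_left ht.2 hl⟩
    simp only [h2]
    field_simp
  have hA := intervalIntegral.integral_interval_add_Ioi
    (integrableOn_Ioi_div_sq (measurable_fract_mul_fract l) (abs_fract_mul_fract_le l) one_pos)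
    (integrableOn_Ioi_div_sq (measurable_fract_mul_fract l) (abs_fract_mul_fract_le l) hN0)
  have hJ := intervalIntegral.integral_interval_add_Ioi
    (integrableOn_Ioi_sawtoothPrimitive_div_sq one_pos)
    (integrableOn_Ioi_sawtoothPrimitive_div_sq hN0)
  rw [Afn_eq_add_integral_Ioi_one hl hl1.le, ← hA, hmid, integral_fract_div_eq hN,
    integral_Ioi_fract_mul_fract_eq hl, Afn_one_eq, ← hJ, one_div l]
  ring

/-- As `λ → 0⁺`, `A(λ) = (λ/2) log(1/λ) + ((1+A(1))/2) λ + O(λ²)`. -/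
theorem Afn_asymptotic :
    (fun l : ℝ => Afn l - (l / 2 * Real.log (1 / l) + (1 + Afn 1) / 2 * l))
      =O[nhdsWithin 0 (Set.Ioi (0:ℝ))] (fun l : ℝ => l ^ 2) := by
  refine IsBigO.of_bound 2 ?_
  filter_upwards [Ioo_mem_nhdsGT (one_pos (α := ℝ))] with l hl
  have hl0 : 0 < l := hl.1
  have hN0 : 0 < l⁻¹ := inv_pos.2 hl0
  have h1 : |sawtoothPrimitive l⁻¹ / l⁻¹| ≤ l / 8 := by
    rw [div_inv_eq_mul, abs_mul, abs_of_pos hl0]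
    nlinarith [abs_sawtoothPrimitive_le l⁻¹]
  have h2 := abs_integral_Ioi_sawtoothPrimitive_le hN0
  have h3 := abs_integral_Ioi_fract_mul_fract_sub_le hN0
  have e : 1 / (8 * l⁻¹) = l / 8 := by field_simp
  rw [e] at h2
  rw [one_div l⁻¹, inv_inv] at h3
  rw [Afn_sub_eq hl0 hl.2, norm_mul, norm_pow, Real.norm_eq_abs, Real.norm_eq_abs,
    abs_of_pos hl0]
  have h4 := (abs_add_le _ _).trans (add_le_add ((abs_sub _ _).trans (add_le_add h1 h2)) h3)
  nlinarith [mul_le_mul_of_nonneg_left h4 hl0.le]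
end

section
/- Let g(x) = Σ_{l≥1}(1 − 2{lx})/l and A = ∫_0^∞ {t}²/t² dt. There is an absolute constant C > 0 such that ∫_0^1 |g(x)|^K dx = 2 e^{−A} Γ(K+1) (1 + O(exp(−C K))) as K → ∞ through the natural numbers. -/
open MeasureTheory Filter

/-- `A = ∫_0^∞ {t}²/t² dt`. -/
noncomputable def Aconst : ℝ := ∫ t in Set.Ioi (0:ℝ), Int.fract t ^ 2 / t ^ 2

theorem log_one_add_inv_le {a : ℝ} (ha : 0 < a) :
    Real.log (1 + a⁻¹) ≤ (1 / a + 1 / (a + 1)) / 2 := by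
  have h1 : (1 : ℝ) ≤ 1 + a⁻¹ := by have := inv_pos.2 ha; linarith
  have h := Real.self_le_sinh_iff.2 (Real.log_nonneg h1)
  rw [Real.sinh_log (by linarith)] at h
  refine h.trans_eq ?_
  field_simp
  ring

theorem le_log_one_add_inv {a : ℝ} (ha : 0 < a) :
    2 / (2 * a + 1) ≤ Real.log (1 + a⁻¹) := by
  have h := Real.hasSum_log_one_add_inv ha
  have := h.summable.sum_le_tsum {0} (fun k _ => by positivity)
  rw [h.tsum_eq] at this
  simpa [div_eq_mul_inv] using this

theorem log_succ_sub_log {n : ℕ} (hn : 1 ≤ n) :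
    Real.log ((n + 1 : ℕ) : ℝ) = Real.log n + Real.log (1 + (n : ℝ)⁻¹) := by
  have h0 : (0 : ℝ) < n := by exact_mod_cast hn
  rw [← Real.log_mul h0.ne' (by positivity)]
  congr 1
  push_cast
  field_simp

theorem harmonic_sub_log_sub_gamma_bounds {n : ℕ} (hn : 1 ≤ n) :
    0 ≤ (harmonic n : ℝ) - Real.log n - Real.eulerMascheroniConstant ∧
      (harmonic n : ℝ) - Real.log n - Real.eulerMascheroniConstant ≤ 1 / n := by
  have h0 : (0 : ℝ) < n := by exact_mod_cast hn
  have h1 := Real.eulerMascheroniConstant_lt_eulerMascheroniSeq' n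
  have h2 := Real.eulerMascheroniSeq_lt_eulerMascheroniConstant n
  simp only [Real.eulerMascheroniSeq', Real.eulerMascheroniSeq, if_neg (by omega : n ≠ 0)] at h1 h2
  have h3 := log_succ_sub_log hn
  push_cast at h3
  have h4 := Real.log_le_sub_one_of_pos (show 0 < 1 + (n : ℝ)⁻¹ by positivity)
  rw [one_div]
  constructor <;> linarith

theorem tendsto_harmonic_sub_log_add (c : ℝ) :
    Tendsto (fun n : ℕ => (harmonic (n + 1) : ℝ) - Real.log (n + 1 : ℕ) -
      1 / (2 * (n + 1 : ℕ)) + c / (n + 1 : ℕ) ^ 2) atTop (nhds Real.eulerMascheroniConstant) := by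
  have h1 := (tendsto_add_atTop_iff_nat 1).2 Real.tendsto_harmonic_sub_log
  have h2 : Tendsto (fun n : ℕ => 1 / (2 * ((n + 1 : ℕ) : ℝ))) atTop (nhds 0) := by
    have := (tendsto_one_div_add_atTop_nhds_zero_nat (𝕜 := ℝ)).const_mul (1 / 2)
    rw [mul_zero] at this
    refine this.congr fun n => ?_
    push_cast
    field_simp
  have h3 : Tendsto (fun n : ℕ => c / ((n + 1 : ℕ) : ℝ) ^ 2) atTop (nhds 0) := by
    have := ((tendsto_one_div_add_atTop_nhds_zero_nat (𝕜 := ℝ)).pow 2).const_mul c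
    rw [zero_pow two_ne_zero, mul_zero] at this
    refine this.congr fun n => ?_
    push_cast
    field_simp
  simpa using (h1.sub h2).add h3

theorem abs_harmonic_sub_log_sub_gamma_sub_le {n : ℕ} (hn : 1 ≤ n) :
    |(harmonic n : ℝ) - Real.log n - Real.eulerMascheroniConstant - 1 / (2 * n)| ≤
      1 / (8 * n ^ 2) := by
  obtain ⟨m, rfl⟩ : ∃ m, n = m + 1 := ⟨n - 1, by omega⟩
  have step : ∀ k : ℕ, (harmonic (k + 1 + 1) : ℝ) = harmonic (k + 1) + 1 / ((k : ℝ) + 2) := by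
    intro k
    rw [harmonic_succ (k + 1)]
    push_cast
    rw [one_div]
    ring_nf
  have up : Monotone (fun n : ℕ => (harmonic (n + 1) : ℝ) - Real.log (n + 1 : ℕ) -
      1 / (2 * (n + 1 : ℕ)) + 0 / (n + 1 : ℕ) ^ 2) := by
    refine monotone_nat_of_le_succ fun k => ?_
    have hl := log_succ_sub_log (Nat.succ_le_succ (Nat.zero_le k))
    have hb := log_one_add_inv_le (show (0 : ℝ) < (k + 1 : ℕ) by positivity)
    have hk := step k
    simp only [Nat.succ_eq_add_one] at hl
    rw [hl, hk]
    have e : (1 : ℝ) / ((k : ℝ) + 2) - 1 / (2 * ((k + 1 + 1 : ℕ) : ℝ)) + 1 / (2 * ((k + 1 : ℕ) : ℝ)) =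
      (1 / ((k + 1 : ℕ) : ℝ) + 1 / (((k + 1 : ℕ) : ℝ) + 1)) / 2 := by
      push_cast
      field_simp
      ring
    simp only [zero_div]
    linarith
  have down : Antitone (fun n : ℕ => (harmonic (n + 1) : ℝ) - Real.log (n + 1 : ℕ) -
      1 / (2 * (n + 1 : ℕ)) + (1 / 8) / (n + 1 : ℕ) ^ 2) := by
    refine antitone_nat_of_succ_le fun k => ?_
    have hl := log_succ_sub_log (Nat.succ_le_succ (Nat.zero_le k))
    have hb := le_log_one_add_inv (show (0 : ℝ) < (k + 1 : ℕ) by positivity)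
    have hk := step k
    simp only [Nat.succ_eq_add_one] at hl
    rw [hl, hk]
    have e : (1 : ℝ) / ((k : ℝ) + 2) - 1 / (2 * ((k + 1 + 1 : ℕ) : ℝ)) + 1 / (2 * ((k + 1 : ℕ) : ℝ))
       + (1 / 8) / ((k + 1 + 1 : ℕ) : ℝ) ^ 2 - (1 / 8) / ((k + 1 : ℕ) : ℝ) ^ 2 ≤
      2 / (2 * ((k + 1 : ℕ) : ℝ) + 1) := by
      have hx : (0 : ℝ) < (k : ℝ) + 1 := by positivity
      push_cast
      generalize (k : ℝ) = y at hx
      have h2 : 2 / (2 * (y + 1) + 1) - (1 / (y + 2) - 1 / (2 * (y + 1 + 1)) + 1 / (2 * (y + 1))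
          + (1 / 8) / (y + 1 + 1) ^ 2 - (1 / 8) / (y + 1) ^ 2) =
          (2 * (1 / 8) * (2 * (y + 1) + 1) ^ 2 - (y + 1) * (y + 2)) /
            (2 * (y + 1) ^ 2 * (y + 2) ^ 2 * (2 * (y + 1) + 1)) := by
        have : y + 2 ≠ 0 := by linarith
        have : 2 * (y + 1) + 1 ≠ 0 := by linarith
        have : y + 1 + 1 ≠ 0 := by linarith
        field_simp
        ring
      have h3 : 0 ≤ (2 * (1 / 8) * (2 * (y + 1) + 1) ^ 2 - (y + 1) * (y + 2)) /
            (2 * (y + 1) ^ 2 * (y + 2) ^ 2 * (2 * (y + 1) + 1)) := by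
        refine div_nonneg (by nlinarith) ?_
        have : 0 < 2 * (y + 1) + 1 := by linarith
        positivity
      linarith
    linarith
  have h1 := up.ge_of_tendsto (tendsto_harmonic_sub_log_add 0) m
  have h2 := down.le_of_tendsto (tendsto_harmonic_sub_log_add (1 / 8)) m
  simp only [zero_div, div_div] at h1 h2
  have h3 : (0 : ℝ) ≤ 1 / (8 * ((m + 1 : ℕ) : ℝ) ^ 2) := by positivity
  rw [abs_le]
  constructor <;> linarith

theorem abs_harmonic_floor_sub_le {y : ℝ} (hy : 1 ≤ y) :
    |(harmonic ⌊y⌋₊ : ℝ) - Real.log y - Real.eulerMascheroniConstant -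
      (1 - 2 * Int.fract y) / (2 * y)| ≤ 3 / y ^ 2 := by
  have hy0 : 0 < y := by linarith
  have hn : 1 ≤ ⌊y⌋₊ := Nat.one_le_floor_iff _ |>.2 hy
  have hf : Int.fract y = y - ⌊y⌋₊ := by
    rw [Int.fract, natCast_floor_eq_intCast_floor hy0.le]
  have hfl := Nat.floor_le hy0.le
  have hfl' := Nat.lt_floor_add_one y
  have h1 := abs_le.1 (abs_harmonic_sub_log_sub_gamma_sub_le hn)
  rw [hf]
  have hn1 : (1 : ℝ) ≤ ⌊y⌋₊ := by exact_mod_cast hn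
  generalize (harmonic ⌊y⌋₊ : ℝ) = H at *
  generalize (⌊y⌋₊ : ℝ) = n at *
  have hn0 : 0 < n := by linarith
  have hlog : Real.log y - Real.log n = Real.log (y / n) := (Real.log_div hy0.ne' hn0.ne').symm
  have hu := Real.log_le_sub_one_of_pos (div_pos hy0 hn0)
  have hl := Real.one_sub_inv_le_log_of_pos (div_pos hy0 hn0)
  rw [← hlog] at hu hl
  have e1 : 1 / (8 * n ^ 2) ≤ (1 / 2) / y ^ 2 := by
    rw [div_le_div_iff₀ (by positivity) (by positivity)]
    nlinarith
  have e2 : 1 / (2 * n) - (1 - 2 * (y - n)) / (2 * y) - (1 - (y / n)⁻¹) = (y - n) / (2 * n * y) := by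
    field_simp
    ring
  have e3 : (y - n) / (2 * n * y) ≤ 1 / y ^ 2 := by
    rw [div_le_div_iff₀ (by positivity) (by positivity)]
    nlinarith
  have e4 : (y / n - 1) - (1 - (y / n)⁻¹) ≤ 2 / y ^ 2 := by
    have : (y / n - 1) - (1 - (y / n)⁻¹) = (y - n) ^ 2 / (n * y) := by
      field_simp
    rw [this, div_le_div_iff₀ (by positivity) (by positivity)]
    have a1 : (y - n) ^ 2 ≤ 1 := by nlinarith
    have a2 : y ^ 2 ≤ 2 * (n * y) := by nlinarith
    calc (y - n) ^ 2 * y ^ 2 ≤ 1 * y ^ 2 := by gcongr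
      _ ≤ _ := by linarith
  have e5 : 0 ≤ (y - n) / (2 * n * y) := div_nonneg (by linarith) (by positivity)
  have e6 : 3 / y ^ 2 = (1 / 2) / y ^ 2 + 1 / y ^ 2 + (3 / 2) / y ^ 2 := by ring
  have e7 : 3 / y ^ 2 = (1 / 2) / y ^ 2 + 2 / y ^ 2 + (1 / 2) / y ^ 2 := by ring
  have e8 : 0 ≤ (1 / 2) / y ^ 2 := by positivity
  have e9 : 0 ≤ (3 / 2) / y ^ 2 := by positivity
  rw [abs_le]
  constructor <;> linarith

theorem measurable_fract_sq_div_sq : Measurable fun t : ℝ => Int.fract t ^ 2 / t ^ 2 := by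
  fun_prop

theorem fract_sq_div_sq_le_inv (t : ℝ) : Int.fract t ^ 2 / t ^ 2 ≤ t ^ (-2 : ℝ) := by
  rw [show (-2 : ℝ) = ((-2 : ℤ) : ℝ) by norm_num, Real.rpow_intCast, zpow_neg, ← one_div]
  have : Int.fract t ^ 2 ≤ 1 := pow_le_one₀ (Int.fract_nonneg t) (Int.fract_lt_one t).le
  have h2 : t ^ (2 : ℤ) = t ^ 2 := by norm_cast
  rw [h2]
  gcongr

theorem integrableOn_fract_sq_div_sq_Ioi {a : ℝ} (ha : 0 < a) :
    IntegrableOn (fun t : ℝ => Int.fract t ^ 2 / t ^ 2) (Set.Ioi a) := by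
  refine Integrable.mono' (integrableOn_Ioi_rpow_of_lt (by norm_num : (-2 : ℝ) < -1) ha)
    measurable_fract_sq_div_sq.aestronglyMeasurable (Eventually.of_forall fun t => ?_)
  rw [Real.norm_of_nonneg (by positivity)]
  exact fract_sq_div_sq_le_inv t

theorem integrableOn_fract_sq_div_sq :
    IntegrableOn (fun t : ℝ => Int.fract t ^ 2 / t ^ 2) (Set.Ioi 0) := by
  rw [← Set.Ioc_union_Ioi_eq_Ioi zero_le_one]
  refine IntegrableOn.union ?_ (integrableOn_fract_sq_div_sq_Ioi one_pos)
  refine Integrable.mono' (g := fun _ => 1) (by simp)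
    measurable_fract_sq_div_sq.aestronglyMeasurable ?_
  refine (ae_restrict_iff' measurableSet_Ioc).2 (Eventually.of_forall fun t ht => ?_)
  rw [Real.norm_of_nonneg (by positivity)]
  refine div_le_one_of_le₀ ?_ (by positivity)
  have : Int.fract t ≤ t := by
    have : (0 : ℝ) ≤ ⌊t⌋ := by exact_mod_cast Int.floor_nonneg.2 ht.1.le
    linarith [Int.self_sub_floor t]
  exact pow_le_pow_left₀ (Int.fract_nonneg t) this 2

theorem intervalIntegrable_fract_sq_div_sq {a b : ℝ} (ha : 0 ≤ a) (hb : 0 ≤ b) :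
    IntervalIntegrable (fun t : ℝ => Int.fract t ^ 2 / t ^ 2) volume a b :=
  ⟨integrableOn_fract_sq_div_sq.mono_set fun _ ht => ha.trans_lt ht.1,
    integrableOn_fract_sq_div_sq.mono_set fun _ ht => hb.trans_lt ht.1⟩

theorem integral_fract_sq_div_sq_succ {n : ℕ} (hn : 1 ≤ n) :
    ∫ t in (n : ℝ)..(n + 1 : ℕ), Int.fract t ^ 2 / t ^ 2 =
      2 - 1 / (n + 1) - 2 * n * (Real.log (n + 1 : ℕ) - Real.log n) := by
  have h0 : (0 : ℝ) < n := by exact_mod_cast hn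
  have hle : (n : ℝ) ≤ (n + 1 : ℕ) := by push_cast; linarith
  have hcongr : ∫ t in (n : ℝ)..(n + 1 : ℕ), Int.fract t ^ 2 / t ^ 2 =
      ∫ t in (n : ℝ)..(n + 1 : ℕ), (1 - 2 * n * t⁻¹ + n ^ 2 * (t ^ 2)⁻¹) := by
    rw [intervalIntegral.integral_of_le hle, intervalIntegral.integral_of_le hle,
      integral_Ioc_eq_integral_Ioo, integral_Ioc_eq_integral_Ioo]
    refine setIntegral_congr_fun measurableSet_Ioo fun t ht => ?_
    have ht0 : 0 < t := h0.trans ht.1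
    have hfl : ⌊t⌋ = n := Int.floor_eq_iff.2 ⟨by exact_mod_cast ht.1.le, by
      have := ht.2; push_cast at this ⊢; exact this⟩
    have : Int.fract t = t - n := by rw [Int.fract, hfl]; norm_cast
    simp only [this]
    field_simp
    ring
  have hpos : ∀ t ∈ Set.uIcc (n : ℝ) (n + 1 : ℕ), t ≠ 0 := by
    intro t ht
    rw [Set.uIcc_of_le hle] at ht
    exact (h0.trans_le ht.1).ne'
  have hd : ∀ t ∈ Set.uIcc (n : ℝ) (n + 1 : ℕ),
      HasDerivAt (fun t : ℝ => t - 2 * n * Real.log t - n ^ 2 * t⁻¹)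
        (1 - 2 * n * t⁻¹ + n ^ 2 * (t ^ 2)⁻¹) t := by
    intro t ht
    exact (((hasDerivAt_id t).sub ((Real.hasDerivAt_log (hpos t ht)).const_mul (2 * (n : ℝ)))).sub
      ((hasDerivAt_inv (hpos t ht)).const_mul ((n : ℝ) ^ 2))).congr_deriv (by ring)
  rw [hcongr, intervalIntegral.integral_eq_sub_of_hasDerivAt hd]
  · push_cast
    field_simp
    ring
  · refine ContinuousOn.intervalIntegrable fun t ht => ContinuousAt.continuousWithinAt ?_
    have := hpos t ht
    fun_prop (disch := positivity)

theorem integral_fract_sq_div_sq {M : ℕ} (hM : 1 ≤ M) :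
    ∫ t in (0 : ℝ)..M, Int.fract t ^ 2 / t ^ 2 =
      2 * M - harmonic M - 2 * M * Real.log M + 2 * Real.log (M.factorial) := by
  induction M, hM using Nat.le_induction with
  | base =>
    rw [intervalIntegral.integral_of_le (by norm_num), integral_Ioc_eq_integral_Ioo]
    have : ∫ t in Set.Ioo (0 : ℝ) (1 : ℕ), Int.fract t ^ 2 / t ^ 2 =
        ∫ t in Set.Ioo (0 : ℝ) (1 : ℕ), (1 : ℝ) := by
      refine setIntegral_congr_fun measurableSet_Ioo fun t ht => ?_
      have ht1 : t < 1 := by simpa using ht.2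
      simp only [Int.fract_eq_self.2 ⟨ht.1.le, ht1⟩]
      exact div_self (pow_ne_zero 2 ht.1.ne')
    rw [this]
    norm_num [harmonic]
  | succ n hn ih =>
    rw [← intervalIntegral.integral_add_adjacent_intervals
      (intervalIntegrable_fract_sq_div_sq le_rfl (Nat.cast_nonneg n))
      (intervalIntegrable_fract_sq_div_sq (Nat.cast_nonneg n) (Nat.cast_nonneg (n + 1))), ih,
      integral_fract_sq_div_sq_succ hn, harmonic_succ, Nat.factorial_succ, Nat.cast_mul,
      Real.log_mul (by positivity) (by positivity)]
    push_cast
    ring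

theorem abs_Aconst_sub_le {M : ℕ} (hM : 1 ≤ M) :
    |Aconst - (2 * M - harmonic M - 2 * M * Real.log M + 2 * Real.log (M.factorial))| ≤ 1 / M := by
  have h0 : (0 : ℝ) < M := by exact_mod_cast hM
  rw [← integral_fract_sq_div_sq hM, Aconst,
    ← intervalIntegral.integral_interval_add_Ioi integrableOn_fract_sq_div_sq
      (integrableOn_fract_sq_div_sq_Ioi h0), add_sub_cancel_left,
    abs_of_nonneg (setIntegral_nonneg measurableSet_Ioi fun t _ => by positivity)]
  refine (setIntegral_mono (integrableOn_fract_sq_div_sq_Ioi h0)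
    (integrableOn_Ioi_rpow_of_lt (by norm_num : (-2 : ℝ) < -1) h0)
    fract_sq_div_sq_le_inv).trans_eq ?_
  rw [integral_Ioi_rpow_of_lt (by norm_num) h0]
  norm_num [Real.rpow_neg_one]

noncomputable def sawSum (N : ℕ) (x : ℝ) : ℝ :=
  ∑ l ∈ Finset.range N, (1 - 2 * Int.fract (((l : ℝ) + 1) * x)) / ((l : ℝ) + 1)

theorem harmonic_eq_sum (N : ℕ) : (harmonic N : ℝ) = ∑ l ∈ Finset.range N, 1 / ((l : ℝ) + 1) := by
  simp [harmonic]

theorem sawSum_eq {x : ℝ} (hx : 0 ≤ x) (N : ℕ) :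
    sawSum N x = harmonic N - 2 * x * N +
      2 * ∑ l ∈ Finset.range N, (⌊((l : ℝ) + 1) * x⌋₊ : ℝ) / ((l : ℝ) + 1) := by
  have hN : 2 * x * N = ∑ l ∈ Finset.range N, 2 * x := by simp [mul_comm]
  rw [harmonic_eq_sum, hN, Finset.mul_sum, ← Finset.sum_sub_distrib, ← Finset.sum_add_distrib,
    sawSum]
  refine Finset.sum_congr rfl fun l _ => ?_
  have h0 : (0 : ℝ) ≤ ((l : ℝ) + 1) * x := by positivity
  have : Int.fract (((l : ℝ) + 1) * x) = ((l : ℝ) + 1) * x - ⌊((l : ℝ) + 1) * x⌋₊ := by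
    rw [Int.fract, natCast_floor_eq_intCast_floor h0]
  rw [this]
  field_simp
  ring

theorem natCast_ne_natCast_mul {x : ℝ} (hx : Irrational x) {a : ℕ} (b : ℕ) (ha : a ≠ 0) :
    (b : ℝ) ≠ a * x := by
  have := (hx.natCast_mul ha).ne_nat b
  exact this.symm

/-- Counting the lattice points under the line of slope `x` by rows and by columns. -/
theorem sum_floor_div {x : ℝ} (hx : Irrational x) (h0 : 0 < x) (h1 : x < 1) (N : ℕ) :
    ∑ l ∈ Finset.range N, (⌊((l : ℝ) + 1) * x⌋₊ : ℝ) / ((l : ℝ) + 1) =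
      ∑ m ∈ Finset.range ⌊(N : ℝ) * x⌋₊,
        ((harmonic N : ℝ) - harmonic ⌊((m : ℝ) + 1) * x⁻¹⌋₊) := by
  induction N with
  | zero => simp
  | succ N ih =>
    have hH : (harmonic (N + 1) : ℝ) = harmonic N + 1 / ((N : ℝ) + 1) := by
      rw [harmonic_succ]; push_cast; rw [one_div]
    have hshift : ∀ M : ℕ, ∑ m ∈ Finset.range M,
        ((harmonic (N + 1) : ℝ) - harmonic ⌊((m : ℝ) + 1) * x⁻¹⌋₊) =
        ∑ m ∈ Finset.range M, ((harmonic N : ℝ) - harmonic ⌊((m : ℝ) + 1) * x⁻¹⌋₊) +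
          M / ((N : ℝ) + 1) := by
      intro M
      have : (M : ℝ) / ((N : ℝ) + 1) = ∑ m ∈ Finset.range M, 1 / ((N : ℝ) + 1) := by
        simp [div_eq_mul_inv]
      rw [this, ← Finset.sum_add_distrib]
      refine Finset.sum_congr rfl fun m _ => ?_
      rw [hH]; ring
    rw [Finset.sum_range_succ, ih]
    push_cast
    have hN0 : (0 : ℝ) ≤ (N : ℝ) * x := by positivity
    have hfl := Nat.floor_le hN0
    have hfl' := Nat.lt_floor_add_one ((N : ℝ) * x)
    have hlow : ⌊(N : ℝ) * x⌋₊ ≤ ⌊((N : ℝ) + 1) * x⌋₊ := Nat.floor_mono (by nlinarith)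
    have hup : ⌊((N : ℝ) + 1) * x⌋₊ < ⌊(N : ℝ) * x⌋₊ + 2 := by
      rw [Nat.floor_lt (by positivity)]
      push_cast
      nlinarith
    rcases (by omega : ⌊((N : ℝ) + 1) * x⌋₊ = ⌊(N : ℝ) * x⌋₊ ∨
      ⌊((N : ℝ) + 1) * x⌋₊ = ⌊(N : ℝ) * x⌋₊ + 1) with h | h
    · rw [h, hshift]
    · rw [h, Finset.sum_range_succ, hshift]
      have hge : ((⌊(N : ℝ) * x⌋₊ : ℝ) + 1) ≤ ((N : ℝ) + 1) * x := by
        have := Nat.floor_le (show (0 : ℝ) ≤ ((N : ℝ) + 1) * x by positivity)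
        rw [h] at this
        exact_mod_cast this
      have hne := natCast_ne_natCast_mul hx (⌊(N : ℝ) * x⌋₊ + 1) (Nat.succ_ne_zero N)
      push_cast at hne
      have hlt := lt_of_le_of_ne hge hne
      have hfloor : ⌊((⌊(N : ℝ) * x⌋₊ : ℝ) + 1) * x⁻¹⌋₊ = N := by
        rw [← div_eq_mul_inv, Nat.floor_eq_iff (by positivity), le_div_iff₀ h0, div_lt_iff₀ h0]
        exact ⟨hfl'.le, hlt⟩
      rw [hfloor, hH]
      push_cast
      ring

theorem sawSum_fract (N : ℕ) (y : ℝ) : sawSum N (Int.fract y) = sawSum N y := by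
  refine Finset.sum_congr rfl fun l _ => ?_
  congr 3
  rw [Int.fract_eq_fract]
  refine ⟨-((l + 1) * ⌊y⌋), ?_⟩
  rw [Int.fract]
  push_cast
  ring

theorem sum_one_div_succ_sq_le (M : ℕ) : ∑ m ∈ Finset.range M, 1 / ((m : ℝ) + 1) ^ 2 ≤ 2 := by
  have : ∀ M : ℕ, ∑ m ∈ Finset.range (M + 1), 1 / ((m : ℝ) + 1) ^ 2 ≤ 2 - 1 / ((M : ℝ) + 1) := by
    intro M
    induction M with
    | zero => norm_num
    | succ M ih =>
      rw [Finset.sum_range_succ]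
      have : 1 / (((M + 1 : ℕ) : ℝ) + 1) ^ 2 ≤ 1 / ((M : ℝ) + 1) - 1 / (((M + 1 : ℕ) : ℝ) + 1) := by
        push_cast
        have h : 1 / ((M : ℝ) + 1) - 1 / ((M : ℝ) + 1 + 1) = 1 / (((M : ℝ) + 1) * ((M : ℝ) + 1 + 1)) := by
          field_simp; ring
        rw [h]
        gcongr
        nlinarith
      linarith
  cases M with
  | zero => norm_num
  | succ M => exact (this M).trans (by have : (0 : ℝ) ≤ 1 / ((M : ℝ) + 1) := by positivity
                                       linarith)

theorem sum_log_succ (M : ℕ) :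
    ∑ m ∈ Finset.range M, Real.log ((m : ℝ) + 1) = Real.log M.factorial := by
  induction M with
  | zero => simp
  | succ M ih =>
    rw [Finset.sum_range_succ, ih, Nat.factorial_succ, Nat.cast_mul,
      Real.log_mul (by positivity) (by positivity), Nat.cast_succ, add_comm]

theorem abs_sum_harmonic_floor_sub_le {x : ℝ} (h0 : 0 < x) (h1 : x < 1) (M : ℕ) :
    |∑ m ∈ Finset.range M, (harmonic ⌊((m : ℝ) + 1) * x⁻¹⌋₊ : ℝ) -
      (Real.log M.factorial - M * Real.log x + M * Real.eulerMascheroniConstant +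
        x / 2 * sawSum M (Int.fract x⁻¹))| ≤ 6 * x := by
  have e : Real.log M.factorial - M * Real.log x + M * Real.eulerMascheroniConstant +
        x / 2 * sawSum M (Int.fract x⁻¹) = ∑ m ∈ Finset.range M,
          (Real.log (((m : ℝ) + 1) * x⁻¹) + Real.eulerMascheroniConstant +
            (1 - 2 * Int.fract (((m : ℝ) + 1) * x⁻¹)) / (2 * (((m : ℝ) + 1) * x⁻¹))) := by
    rw [← sum_log_succ, sawSum_fract, sawSum, Finset.mul_sum]
    have a1 : (M : ℝ) * Real.log x = ∑ m ∈ Finset.range M, Real.log x := by simp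
    have a2 : (M : ℝ) * Real.eulerMascheroniConstant =
      ∑ m ∈ Finset.range M, Real.eulerMascheroniConstant := by simp
    rw [a1, a2, ← Finset.sum_sub_distrib, ← Finset.sum_add_distrib, ← Finset.sum_add_distrib]
    refine Finset.sum_congr rfl fun m _ => ?_
    rw [Real.log_mul (by positivity) (by positivity), Real.log_inv]
    field_simp
    ring
  rw [e, ← Finset.sum_sub_distrib]
  refine (Finset.abs_sum_le_sum_abs _ _).trans ?_
  have hterm : ∀ m ∈ Finset.range M, |(harmonic ⌊((m : ℝ) + 1) * x⁻¹⌋₊ : ℝ) -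
      (Real.log (((m : ℝ) + 1) * x⁻¹) + Real.eulerMascheroniConstant +
            (1 - 2 * Int.fract (((m : ℝ) + 1) * x⁻¹)) / (2 * (((m : ℝ) + 1) * x⁻¹)))| ≤
      3 * x ^ 2 * (1 / ((m : ℝ) + 1) ^ 2) := by
    intro m _
    have hx1 : 1 ≤ x⁻¹ := (one_le_inv₀ h0).2 h1.le
    have hm : (0 : ℝ) ≤ m := Nat.cast_nonneg m
    have h := abs_harmonic_floor_sub_le (y := ((m : ℝ) + 1) * x⁻¹) (by nlinarith)
    have e1 : 3 / (((m : ℝ) + 1) * x⁻¹) ^ 2 = 3 * x ^ 2 * (1 / ((m : ℝ) + 1) ^ 2) := by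
      field_simp
    rw [← e1]
    refine le_trans (le_of_eq ?_) h
    congr 1
    ring
  refine (Finset.sum_le_sum hterm).trans ?_
  rw [← Finset.mul_sum]
  have := sum_one_div_succ_sq_le M
  have hx2 : 0 < x ^ 2 := by positivity
  nlinarith

theorem abs_sawSum_add_le {x : ℝ} (hx : Irrational x) (h0 : 0 < x) (h1 : x < 1) {N : ℕ}
    (hM : 1 ≤ ⌊(N : ℝ) * x⌋₊) :
    |sawSum N x + x * sawSum ⌊(N : ℝ) * x⌋₊ (Int.fract x⁻¹) + Real.log x + Aconst| ≤
      6 / ⌊(N : ℝ) * x⌋₊ + 14 * x := by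
  have hE := abs_le.1 (abs_sum_harmonic_floor_sub_le h0 h1 ⌊(N : ℝ) * x⌋₊)
  have hA := abs_le.1 (abs_Aconst_sub_le hM)
  have hS : sawSum N x = harmonic N - 2 * x * N + 2 * (⌊(N : ℝ) * x⌋₊ * harmonic N -
      ∑ m ∈ Finset.range ⌊(N : ℝ) * x⌋₊, (harmonic ⌊((m : ℝ) + 1) * x⁻¹⌋₊ : ℝ)) := by
    rw [sawSum_eq h0.le, sum_floor_div hx h0 h1, Finset.sum_sub_distrib, Finset.sum_const,
      Finset.card_range, nsmul_eq_mul]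
  have hfl := Nat.floor_le (show (0 : ℝ) ≤ (N : ℝ) * x by positivity)
  have hfl' := Nat.lt_floor_add_one ((N : ℝ) * x)
  have hM1 : (1 : ℝ) ≤ ⌊(N : ℝ) * x⌋₊ := by exact_mod_cast hM
  have hN : 1 ≤ N := by
    rcases Nat.eq_zero_or_pos N with h | h
    · simp [h] at hM
    · exact h
  have hHN := harmonic_sub_log_sub_gamma_bounds hN
  have hHM := harmonic_sub_log_sub_gamma_bounds hM
  have hN0 : (0 : ℝ) < N := by exact_mod_cast hN
  rw [hS]
  generalize ⌊(N : ℝ) * x⌋₊ = M at *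
  generalize ∑ m ∈ Finset.range M, (harmonic ⌊((m : ℝ) + 1) * x⁻¹⌋₊ : ℝ) = T at *
  generalize sawSum M (Int.fract x⁻¹) = S at *
  generalize (harmonic N : ℝ) = HN at *
  generalize (harmonic M : ℝ) = HM at *
  generalize Real.log (M.factorial) = F at *
  generalize (M : ℝ) = m at *
  generalize (N : ℝ) = n at *
  generalize Real.eulerMascheroniConstant = γ at *
  have hm0 : 0 < m := by linarith
  obtain ⟨hE1, hE2⟩ := hE
  obtain ⟨hA1, hA2⟩ := hA
  obtain ⟨ha1, ha2⟩ := hHN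
  obtain ⟨hb1, hb2⟩ := hHM
  have hw0 : 0 < n * x := by positivity
  have hlog : Real.log (n * x / m) = Real.log n + Real.log x - Real.log m := by
    rw [Real.log_div (by positivity) hm0.ne', Real.log_mul hN0.ne' h0.ne']
  have hp : 0 < n * x / m := by positivity
  have hu := Real.log_le_sub_one_of_pos hp
  have hl := Real.log_nonneg ((one_le_div hm0).2 hfl)
  have hl' := Real.one_sub_inv_le_log_of_pos hp
  rw [hlog] at hu hl hl'
  have hu1 : n * x / m - 1 ≤ 1 / m := by
    rw [div_sub_one hm0.ne']
    gcongr
    linarith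
  have hmn : 1 / n ≤ 1 / m := one_div_le_one_div_of_le hm0 (by nlinarith)
  have hma : m * (HN - Real.log n - γ) ≤ x := by
    calc m * (HN - Real.log n - γ) ≤ m * (1 / n) := by gcongr
      _ ≤ n * x * (1 / n) := by gcongr
      _ = x := by field_simp
  have hma0 : 0 ≤ m * (HN - Real.log n - γ) := by positivity
  have hmL : m * (Real.log n + Real.log x - Real.log m) ≤ n * x - m := by
    calc m * (Real.log n + Real.log x - Real.log m) ≤ m * (n * x / m - 1) := by gcongr
      _ = _ := by field_simp
  have hmL' : n * x - m - 1 / m ≤ m * (Real.log n + Real.log x - Real.log m) := by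
    calc n * x - m - 1 / m ≤ m * (1 - (n * x / m)⁻¹) := by
          have e1 : m * (1 - (n * x / m)⁻¹) = n * x - m - (n * x - m) ^ 2 / (n * x) := by
            field_simp
            ring
          have e2 : (n * x - m) ^ 2 / (n * x) ≤ 1 / m := by
            gcongr
            nlinarith
          linarith
      _ ≤ _ := by gcongr
  have hm6 : 6 / m = 6 * (1 / m) := by ring
  rw [hm6, abs_le]
  constructor <;> nlinarith

theorem lintegral_Ico_fract (f : ℝ → ENNReal) (k : ℕ) :
    ∫⁻ u in Set.Ico ((k : ℝ) + 1) (k + 2), f (Int.fract u) = ∫⁻ y in Set.Ioo (0 : ℝ) 1, f y := by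
  have hmp : MeasurePreserving (fun y : ℝ => y + ((k : ℝ) + 1)) volume volume :=
    measurePreserving_add_right volume _
  have hme : MeasurableEmbedding (fun y : ℝ => y + ((k : ℝ) + 1)) :=
    (Homeomorph.addRight ((k : ℝ) + 1)).measurableEmbedding
  rw [← hmp.setLIntegral_comp_preimage_emb hme]
  have hpre : (fun y : ℝ => y + ((k : ℝ) + 1)) ⁻¹' Set.Ico ((k : ℝ) + 1) (k + 2) = Set.Ico 0 1 := by
    ext y
    simp only [Set.mem_preimage, Set.mem_Ico]
    constructor <;> rintro ⟨h1, h2⟩ <;> constructor <;> linarith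
  rw [hpre, ← setLIntegral_congr (Ioo_ae_eq_Ico (a := (0 : ℝ)) (b := 1))]
  refine setLIntegral_congr_fun measurableSet_Ioo fun y hy => ?_
  have : Int.fract (y + ((k : ℝ) + 1)) = y := by
    have h : ((k : ℝ) + 1) = ((k + 1 : ℕ) : ℝ) := by push_cast; rfl
    rw [h, Int.fract_add_natCast, Int.fract_eq_self.2 ⟨hy.1.le, hy.2⟩]
  simp only [this]

theorem image_inv_Ioi_one : (fun u : ℝ => u⁻¹) '' Set.Ioi 1 = Set.Ioo 0 1 := by
  ext x
  constructor
  · rintro ⟨u, hu, rfl⟩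
    have hu : (1 : ℝ) < u := hu
    exact ⟨by positivity, inv_lt_one_of_one_lt₀ hu⟩
  · rintro ⟨h0, h1⟩
    exact ⟨x⁻¹, (one_lt_inv₀ h0).2 h1, inv_inv x⟩

/-- A weighted transfer-operator bound for the Gauss map `x ↦ {1/x}`. -/
theorem exists_lintegral_comp_fract_inv_le : ∃ D : ℝ, 0 ≤ D ∧ ∀ f : ℝ → ENNReal,
    ∫⁻ x in Set.Ioo (0 : ℝ) 1, ENNReal.ofReal (Real.exp (-(3 / 4) * Real.log x)) *
      f (Int.fract x⁻¹) ≤ ENNReal.ofReal D * ∫⁻ y in Set.Ioo (0 : ℝ) 1, f y := by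
  have hsum : Summable fun k : ℕ => 1 / |(k : ℝ) + 1| ^ (5 / 4 : ℝ) :=
    (Real.summable_one_div_nat_add_rpow 1 (5 / 4)).2 (by norm_num)
  have hnn : ∀ k : ℕ, 0 ≤ 1 / |(k : ℝ) + 1| ^ (5 / 4 : ℝ) := fun k => by positivity
  refine ⟨∑' k : ℕ, 1 / |(k : ℝ) + 1| ^ (5 / 4 : ℝ), tsum_nonneg hnn, fun f => ?_⟩
  rw [← image_inv_Ioi_one, lintegral_image_eq_lintegral_abs_deriv_mul measurableSet_Ioi
    (f' := fun u => -(u ^ 2)⁻¹)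
    (fun u hu => (hasDerivAt_inv (zero_lt_one.trans hu).ne').hasDerivWithinAt)
    inv_injective.injOn, image_inv_Ioi_one]
  have hcov : Set.Ioi (1 : ℝ) ⊆ ⋃ k : ℕ, Set.Ico ((k : ℝ) + 1) (k + 2) := by
    intro u hu
    have hu : (1 : ℝ) < u := hu
    have h0 : 0 ≤ u - 1 := by linarith
    refine Set.mem_iUnion.2 ⟨⌊u - 1⌋₊, ?_, ?_⟩
    · linarith [Nat.floor_le h0]
    · linarith [Nat.lt_floor_add_one (u - 1)]
  refine (lintegral_mono_set hcov).trans ((lintegral_iUnion_le _ _).trans ?_)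
  rw [ENNReal.ofReal_tsum_of_nonneg hnn hsum, ← ENNReal.tsum_mul_right]
  refine ENNReal.tsum_le_tsum fun k => ?_
  rw [← lintegral_Ico_fract f k, ← lintegral_const_mul' _ _ ENNReal.ofReal_ne_top]
  refine setLIntegral_mono' measurableSet_Ico fun u hu => ?_
  have hk : (0 : ℝ) < (k : ℝ) + 1 := by positivity
  have hu0 : 0 < u := hk.trans_le hu.1
  rw [inv_inv, ← mul_assoc, ← ENNReal.ofReal_mul (abs_nonneg _)]
  gcongr
  have h1 : |-(u ^ 2)⁻¹| * Real.exp (-(3 / 4) * Real.log u⁻¹) = 1 / u ^ (5 / 4 : ℝ) := by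
    rw [abs_neg, abs_of_pos (by positivity), Real.log_inv, Real.rpow_def_of_pos hu0, one_div,
      ← Real.exp_neg]
    have : (u ^ 2)⁻¹ = Real.exp (-(2 * Real.log u)) := by
      rw [Real.exp_neg, two_mul, Real.exp_add, Real.exp_log hu0, sq]
    rw [this, ← Real.exp_add]
    congr 1
    ring
  rw [h1, abs_of_pos hk]
  gcongr
  exact hu.1

theorem abs_sawSum_le {x : ℝ} (hx : Irrational x) (h0 : 0 < x) (h1 : x < 1) (N : ℕ) :
    |sawSum N x| ≤ -Real.log x + (|Aconst| + 20) +
      x * |sawSum ⌊(N : ℝ) * x⌋₊ (Int.fract x⁻¹)| := by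
  have hlog := Real.log_nonpos h0.le h1.le
  have hA := abs_nonneg Aconst
  rcases Nat.eq_zero_or_pos ⌊(N : ℝ) * x⌋₊ with hM | hM
  · have hS : sawSum N x = harmonic N - 2 * x * N := by
      rw [sawSum_eq h0.le, sum_floor_div hx h0 h1, hM]
      simp
    have hNx : (N : ℝ) * x < 1 := Nat.floor_eq_zero.1 hM
    rw [hM, hS]
    simp only [sawSum, Finset.range_zero, Finset.sum_empty, abs_zero, mul_zero, add_zero]
    rcases Nat.eq_zero_or_pos N with hN | hN
    · simp only [hN, harmonic_zero, Rat.cast_zero, CharP.cast_eq_zero, mul_zero, sub_zero, abs_zero]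
      linarith
    have hN0 : (0 : ℝ) < N := by exact_mod_cast hN
    have hH := harmonic_le_one_add_log N
    have hH0 : (0 : ℝ) ≤ harmonic N := by rw [harmonic_eq_sum]; positivity
    have hlN : Real.log N ≤ -Real.log x := by
      rw [← Real.log_inv]
      refine Real.log_le_log hN0 ?_
      rw [← one_div, le_div_iff₀ h0]
      exact hNx.le
    have hp : 0 ≤ (N : ℝ) * x := by positivity
    rw [abs_le]
    constructor <;> nlinarith
  · have h := abs_sawSum_add_le hx h0 h1 hM
    have hM1 : (1 : ℝ) ≤ ⌊(N : ℝ) * x⌋₊ := by exact_mod_cast hM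
    have h6 : 6 / (⌊(N : ℝ) * x⌋₊ : ℝ) ≤ 6 := div_le_self (by norm_num) hM1
    generalize sawSum ⌊(N : ℝ) * x⌋₊ (Int.fract x⁻¹) = S at *
    have e : sawSum N x = (sawSum N x + x * S + Real.log x + Aconst) + -(x * S) +
      (-Real.log x) + -Aconst := by ring
    have := abs_add_le (sawSum N x + x * S + Real.log x + Aconst + -(x * S) + (-Real.log x))
      (-Aconst)
    have := abs_add_le (sawSum N x + x * S + Real.log x + Aconst + -(x * S)) (-Real.log x)
    have := abs_add_le (sawSum N x + x * S + Real.log x + Aconst) (-(x * S))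
    rw [← e] at *
    rw [abs_neg] at *
    have hxS : |x * S| = x * |S| := by rw [abs_mul, abs_of_pos h0]
    have hl : |Real.log x| = -Real.log x := abs_of_nonpos hlog
    linarith

/-- The truncated Wilton-type sums for the Gauss map. -/
noncomputable def wiltonSum (c : ℝ) : ℕ → ℝ → ℝ
  | 0, _ => 0
  | n + 1, x => -Real.log x + c + x * wiltonSum c n (Int.fract x⁻¹)

theorem neg_log_add_nonneg {c x : ℝ} (hc : 0 ≤ c) (h0 : 0 ≤ x) (h1 : x ≤ 1) :
    0 ≤ -Real.log x + c := by
  have := Real.log_nonpos h0 h1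
  linarith

theorem wiltonSum_nonneg {c : ℝ} (hc : 0 ≤ c) (n : ℕ) {x : ℝ} (h0 : 0 ≤ x) (h1 : x ≤ 1) :
    0 ≤ wiltonSum c n x := by
  induction n generalizing x with
  | zero => exact le_rfl
  | succ n ih =>
    exact add_nonneg (neg_log_add_nonneg hc h0 h1)
      (mul_nonneg h0 (ih (Int.fract_nonneg _) (Int.fract_lt_one _).le))

theorem irrational_fract_inv {x : ℝ} (hx : Irrational x) : Irrational (Int.fract x⁻¹) := by
  rw [Int.fract]
  exact hx.inv.sub_intCast _

theorem abs_sawSum_le_wiltonSum {n : ℕ} : ∀ {N : ℕ} {x : ℝ}, N ≤ n → Irrational x → 0 < x → x < 1 →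
    |sawSum N x| ≤ wiltonSum (|Aconst| + 20) n x := by
  induction n with
  | zero =>
    intro N x hN _ _ _
    simp [Nat.le_zero.1 hN, sawSum, wiltonSum]
  | succ n ih =>
    intro N x hN hx h0 h1
    refine (abs_sawSum_le hx h0 h1 N).trans ?_
    rw [wiltonSum]
    gcongr
    have hirr := irrational_fract_inv hx
    refine ih ?_ hirr (lt_of_le_of_ne (Int.fract_nonneg _) (by simpa using (hirr.ne_nat 0).symm))
      (Int.fract_lt_one _)
    rcases Nat.eq_zero_or_pos N with h | h
    · simp [h]
    · have hN0 : (0 : ℝ) < N := by exact_mod_cast h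
      have : ⌊(N : ℝ) * x⌋₊ < N := by
        rw [Nat.floor_lt (by positivity)]
        nlinarith
      omega

theorem mul_fract_inv_le_half {x : ℝ} (h0 : 0 < x) (h1 : x < 1) : x * Int.fract x⁻¹ ≤ 1 / 2 := by
  have hx1 : 1 < x⁻¹ := (one_lt_inv₀ h0).2 h1
  have hk : (1 : ℝ) ≤ ⌊x⁻¹⌋ := by exact_mod_cast Int.le_floor.2 (by exact_mod_cast hx1.le)
  have hf := Int.fract_lt_one x⁻¹
  have e : x * x⁻¹ = 1 := mul_inv_cancel₀ h0.ne'
  have e2 : x⁻¹ = ⌊x⁻¹⌋ + Int.fract x⁻¹ := (Int.floor_add_fract _).symm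
  have e3 : x * (⌊x⁻¹⌋ + Int.fract x⁻¹) = 1 := by rw [← e2, e]
  nlinarith

theorem wiltonSum_add_two_le {c : ℝ} (hc : 0 ≤ c) (n : ℕ) {x : ℝ} (h0 : 0 < x) (h1 : x < 1) :
    wiltonSum c (n + 2) x ≤ 2 * c + -Real.log x + -Real.log (Int.fract x⁻¹) +
      wiltonSum c n (Int.fract (Int.fract x⁻¹)⁻¹) / 2 := by
  have hy0 := Int.fract_nonneg x⁻¹
  have hy1 := (Int.fract_lt_one x⁻¹).le
  have hl := neg_log_add_nonneg hc hy0 hy1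
  have hW := wiltonSum_nonneg hc n (Int.fract_nonneg (Int.fract x⁻¹)⁻¹)
    (Int.fract_lt_one (Int.fract x⁻¹)⁻¹).le
  have hh := mul_le_mul_of_nonneg_right (mul_fract_inv_le_half h0 h1) hW
  simp only [wiltonSum]
  nlinarith [mul_le_mul_of_nonneg_right h1.le hl]

theorem exists_lintegral_exp_wiltonSum_le {c : ℝ} (hc : 0 ≤ c) : ∃ B : ℝ, ∀ n : ℕ,
    ∫⁻ x in Set.Ioo (0 : ℝ) 1, ENNReal.ofReal (Real.exp (3 / 4 * wiltonSum c (2 * n) x)) ≤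
      ENNReal.ofReal B := by
  obtain ⟨D, hD, hgauss⟩ := exists_lintegral_comp_fract_inv_le
  set K : ℝ := Real.exp (3 / 2 * c) * (D * D) with hK
  have hK0 : 0 ≤ K := by positivity
  refine ⟨K ^ 2 + 1, fun n => ?_⟩
  induction n with
  | zero =>
    simp only [mul_zero, wiltonSum, Real.exp_zero, ENNReal.ofReal_one, lintegral_const,
      MeasurableSet.univ, Measure.restrict_apply, Set.univ_inter, Real.volume_Ioo, sub_zero, mul_one]
    rw [ENNReal.one_le_ofReal]
    nlinarith
  | succ n ih =>
    have hpt : ∀ x ∈ Set.Ioo (0 : ℝ) 1,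
        ENNReal.ofReal (Real.exp (3 / 4 * wiltonSum c (2 * (n + 1)) x)) ≤
        ENNReal.ofReal (Real.exp (3 / 2 * c)) * (ENNReal.ofReal (Real.exp (-(3 / 4) * Real.log x)) *
          (fun y => ENNReal.ofReal (Real.exp (-(3 / 4) * Real.log y)) *
            (fun z => ENNReal.ofReal (Real.exp (3 / 8 * wiltonSum c (2 * n) z)))
              (Int.fract y⁻¹)) (Int.fract x⁻¹)) := by
      intro x hx
      simp only
      rw [← ENNReal.ofReal_mul (by positivity), ← ENNReal.ofReal_mul (by positivity),
        ← ENNReal.ofReal_mul (by positivity), ← Real.exp_add, ← Real.exp_add, ← Real.exp_add]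
      refine ENNReal.ofReal_le_ofReal (Real.exp_le_exp.2 ?_)
      have := wiltonSum_add_two_le hc (2 * n) hx.1 hx.2
      rw [show 2 * (n + 1) = 2 * n + 2 by ring]
      linarith
    refine (setLIntegral_mono' measurableSet_Ioo hpt).trans ?_
    rw [lintegral_const_mul' _ _ ENNReal.ofReal_ne_top]
    have h1 := hgauss (fun y => ENNReal.ofReal (Real.exp (-(3 / 4) * Real.log y)) *
            (fun z => ENNReal.ofReal (Real.exp (3 / 8 * wiltonSum c (2 * n) z))) (Int.fract y⁻¹))
    have h2 := hgauss (fun z => ENNReal.ofReal (Real.exp (3 / 8 * wiltonSum c (2 * n) z)))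
    calc _ ≤ ENNReal.ofReal (Real.exp (3 / 2 * c)) * (ENNReal.ofReal D * (ENNReal.ofReal D *
          ∫⁻ z in Set.Ioo (0 : ℝ) 1, ENNReal.ofReal (Real.exp (3 / 8 * wiltonSum c (2 * n) z)))) := by
          gcongr
          refine h1.trans ?_
          gcongr
      _ = ENNReal.ofReal K *
          ∫⁻ z in Set.Ioo (0 : ℝ) 1, ENNReal.ofReal (Real.exp (3 / 8 * wiltonSum c (2 * n) z)) := by
          rw [hK, ENNReal.ofReal_mul (by positivity), ENNReal.ofReal_mul hD]
          ring
      _ = ∫⁻ z in Set.Ioo (0 : ℝ) 1,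
          ENNReal.ofReal (K * Real.exp (3 / 8 * wiltonSum c (2 * n) z)) := by
          rw [← lintegral_const_mul' _ _ ENNReal.ofReal_ne_top]
          simp only [ENNReal.ofReal_mul hK0]
      _ ≤ ∫⁻ z in Set.Ioo (0 : ℝ) 1, (ENNReal.ofReal (K ^ 2 / 2) + ENNReal.ofReal (1 / 2) *
          ENNReal.ofReal (Real.exp (3 / 4 * wiltonSum c (2 * n) z))) := by
          refine lintegral_mono fun z => ?_
          rw [← ENNReal.ofReal_mul (by norm_num), ← ENNReal.ofReal_add (by positivity) (by positivity)]
          refine ENNReal.ofReal_le_ofReal ?_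
          have e : Real.exp (3 / 4 * wiltonSum c (2 * n) z) =
              Real.exp (3 / 8 * wiltonSum c (2 * n) z) ^ 2 := by
            rw [sq, ← Real.exp_add]
            congr 1
            ring
          rw [e]
          nlinarith [sq_nonneg (K - Real.exp (3 / 8 * wiltonSum c (2 * n) z))]
      _ = ENNReal.ofReal (K ^ 2 / 2) + ENNReal.ofReal (1 / 2) * ∫⁻ z in Set.Ioo (0 : ℝ) 1,
          ENNReal.ofReal (Real.exp (3 / 4 * wiltonSum c (2 * n) z)) := by
          rw [lintegral_add_left measurable_const, lintegral_const_mul' _ _ ENNReal.ofReal_ne_top]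
          simp
      _ ≤ ENNReal.ofReal (K ^ 2 / 2) + ENNReal.ofReal (1 / 2) * ENNReal.ofReal (K ^ 2 + 1) := by
          gcongr
      _ ≤ ENNReal.ofReal (K ^ 2 + 1) := by
          rw [← ENNReal.ofReal_mul (by norm_num), ← ENNReal.ofReal_add (by positivity) (by positivity)]
          exact ENNReal.ofReal_le_ofReal (by nlinarith)

theorem ae_irrational : ∀ᵐ x : ℝ, Irrational x :=
  (Set.countable_range ((↑) : ℚ → ℝ)).ae_notMem volume

theorem measurable_sawSum (N : ℕ) : Measurable (sawSum N) :=
  Finset.measurable_sum _ fun l _ =>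
    ((measurable_fract.comp (measurable_id.const_mul ((l : ℝ) + 1))).const_mul 2).const_sub 1
      |>.div_const _

theorem lintegral_exp_abs_lt_top {g : ℝ → ℝ}
    (hg : ∀ᵐ x ∂(volume.restrict (Set.Ioo (0 : ℝ) 1)),
      Tendsto (fun N => sawSum N x) atTop (nhds (g x))) :
    ∫⁻ x in Set.Ioo (0 : ℝ) 1, ENNReal.ofReal (Real.exp (3 / 4 * |g x|)) < ⊤ := by
  obtain ⟨B, hB⟩ := exists_lintegral_exp_wiltonSum_le (c := |Aconst| + 20) (by positivity)
  refine lt_of_le_of_lt ?_ (ENNReal.ofReal_lt_top (r := B))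
  calc _ = ∫⁻ x in Set.Ioo (0 : ℝ) 1,
        liminf (fun N => ENNReal.ofReal (Real.exp (3 / 4 * |sawSum N x|))) atTop := by
        refine lintegral_congr_ae ?_
        filter_upwards [hg] with x hx
        refine (Tendsto.liminf_eq ?_).symm
        exact ENNReal.tendsto_ofReal ((Real.continuous_exp.tendsto _).comp (hx.abs.const_mul _))
    _ ≤ liminf (fun N => ∫⁻ x in Set.Ioo (0 : ℝ) 1,
          ENNReal.ofReal (Real.exp (3 / 4 * |sawSum N x|))) atTop :=
        lintegral_liminf_le fun N => by
          have := measurable_sawSum N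
          fun_prop
    _ ≤ liminf (fun _ : ℕ => ENNReal.ofReal B) atTop := by
        refine liminf_le_liminf (Eventually.of_forall fun N => le_trans ?_ (hB N))
        refine setLIntegral_mono_ae' measurableSet_Ioo ?_
        filter_upwards [ae_irrational] with x hx hx01
        refine ENNReal.ofReal_le_ofReal (Real.exp_le_exp.2 ?_)
        have := abs_sawSum_le_wiltonSum (n := 2 * N) (N := N) (by omega) hx hx01.1 hx01.2
        linarith
    _ = ENNReal.ofReal B := liminf_const _

theorem ae_comp_fract_inv {P : ℝ → Prop} (hP : ∀ᵐ x ∂(volume.restrict (Set.Ioo (0 : ℝ) 1)), P x) :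
    ∀ᵐ x ∂(volume.restrict (Set.Ioo (0 : ℝ) 1)), P (Int.fract x⁻¹) := by
  obtain ⟨D, hD, hgauss⟩ := exists_lintegral_comp_fract_inv_le
  obtain ⟨t, hPt, ht, ht0⟩ := exists_measurable_superset_of_null (ae_iff.1 hP)
  have hmeas : Measurable (t.indicator (fun _ => (1 : ENNReal))) := measurable_const.indicator ht
  have h := hgauss (t.indicator fun _ => 1)
  rw [lintegral_indicator ht, lintegral_const, Measure.restrict_apply_univ, ht0, mul_zero, mul_zero,
    nonpos_iff_eq_zero, lintegral_eq_zero_iff (by fun_prop)] at h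
  filter_upwards [h] with x hx
  by_contra hn
  have hmem : Int.fract x⁻¹ ∈ t := hPt hn
  simp only [Set.indicator_of_mem hmem, mul_one, Pi.zero_apply, ENNReal.ofReal_eq_zero] at hx
  exact absurd hx (not_le.2 (Real.exp_pos _))

theorem ae_abs_add_log_add_le {g : ℝ → ℝ}
    (hg : ∀ᵐ x ∂(volume.restrict (Set.Ioo (0 : ℝ) 1)),
      Tendsto (fun N => sawSum N x) atTop (nhds (g x))) :
    ∀ᵐ x ∂(volume.restrict (Set.Ioo (0 : ℝ) 1)),
      |g x + (Real.log x + Aconst)| ≤ x * (14 + |g (Int.fract x⁻¹)|) := by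
  filter_upwards [hg, ae_comp_fract_inv hg, ae_restrict_of_ae ae_irrational,
    ae_restrict_mem measurableSet_Ioo] with x h1 h2 hx hx01
  have hM : Tendsto (fun N : ℕ => ⌊(N : ℝ) * x⌋₊) atTop atTop :=
    tendsto_nat_floor_atTop.comp (tendsto_natCast_atTop_atTop.atTop_mul_const hx01.1)
  have hlim := (((h1.add ((h2.comp hM).const_mul x)).add_const (Real.log x)).add_const Aconst).abs
  have hright : Tendsto (fun N : ℕ => 6 / (⌊(N : ℝ) * x⌋₊ : ℝ) + 14 * x) atTop
      (nhds (0 + 14 * x)) :=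
    ((tendsto_natCast_atTop_atTop.comp hM).const_div_atTop 6).add_const _
  have hle := le_of_tendsto_of_tendsto hlim hright
    ((hM.eventually_ge_atTop 1).mono fun N hN => abs_sawSum_add_le hx hx01.1 hx01.2 hN)
  have e : g x + (Real.log x + Aconst) =
      (g x + x * g (Int.fract x⁻¹) + Real.log x + Aconst) - x * g (Int.fract x⁻¹) := by ring
  have := abs_sub (g x + x * g (Int.fract x⁻¹) + Real.log x + Aconst) (x * g (Int.fract x⁻¹))
  rw [← e, abs_mul, abs_of_pos hx01.1] at this
  linarith

theorem sawSum_one_sub {x : ℝ} (hx : Irrational x) (N : ℕ) : sawSum N (1 - x) = -sawSum N x := by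
  rw [sawSum, sawSum, ← Finset.sum_neg_distrib]
  refine Finset.sum_congr rfl fun l _ => ?_
  have hne : Int.fract (((l : ℝ) + 1) * x) ≠ 0 := by
    intro h
    have h2 : (((l : ℝ) + 1) * x) = ⌊((l : ℝ) + 1) * x⌋ := by
      have := Int.floor_add_fract (((l : ℝ) + 1) * x)
      rw [h, add_zero] at this
      exact this.symm
    have h3 := hx.natCast_mul (Nat.succ_ne_zero l)
    push_cast at h3
    exact h3.ne_int _ h2
  have e : ((l : ℝ) + 1) * (1 - x) = -(((l : ℝ) + 1) * x) + (l + 1 : ℕ) := by push_cast; ring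
  rw [e, Int.fract_add_natCast, Int.fract_neg hne]
  ring

theorem ae_one_sub_eq_neg {g : ℝ → ℝ}
    (hg : ∀ᵐ x ∂(volume.restrict (Set.Ioo (0 : ℝ) 1)),
      Tendsto (fun N => sawSum N x) atTop (nhds (g x))) :
    ∀ᵐ x, x ∈ Set.Ioo (0 : ℝ) 1 → g (1 - x) = -g x := by
  rw [ae_restrict_iff' measurableSet_Ioo] at hg
  filter_upwards [hg, (Measure.measurePreserving_sub_left volume (1 : ℝ)).quasiMeasurePreserving.ae hg,
    ae_irrational] with x h1 h2 hx hx01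
  refine tendsto_nhds_unique (h2 ⟨by linarith [hx01.2], by linarith [hx01.1]⟩) ?_
  simpa only [sawSum_one_sub hx] using (h1 hx01).neg

theorem pow_le_factorial_mul_exp {μ : ℝ} (hμ : 0 < μ) {s : ℝ} (hs : 0 ≤ s) (n : ℕ) :
    s ^ n ≤ n.factorial * μ⁻¹ ^ n * Real.exp (μ * s) := by
  have h := Real.pow_div_factorial_le_exp (μ * s) (by positivity) n
  rw [div_le_iff₀ (by positivity), mul_pow] at h
  rw [inv_pow, mul_assoc, mul_comm ((μ ^ n)⁻¹), ← mul_assoc, ← div_eq_mul_inv,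
    le_div_iff₀ (by positivity)]
  linarith

theorem abs_pow_sub_pow_le_factorial {a b u : ℝ} (ha : 0 ≤ a) (hu : 0 ≤ u) (hub : |u - a| ≤ b)
    (K : ℕ) : |u ^ K - a ^ K| ≤
      K.factorial * (4 / 5 : ℝ) ^ K * (5 / 4 * (b * Real.exp (5 / 4 * (a + b)))) := by
  have hb : 0 ≤ b := (abs_nonneg _).trans hub
  cases K with
  | zero =>
    simp only [pow_zero, sub_self, abs_zero]
    positivity
  | succ n =>
    refine (abs_pow_sub_pow_le u a (n + 1)).trans ?_
    have hmax : max |u| |a| ≤ a + b := by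
      rw [abs_of_nonneg hu, abs_of_nonneg ha]
      exact max_le (by linarith [(abs_le.1 hub).2]) (by linarith)
    have h1 : max |u| |a| ^ n ≤ n.factorial * (5 / 4 : ℝ)⁻¹ ^ n * Real.exp (5 / 4 * (a + b)) :=
      (pow_le_pow_left₀ (le_max_of_le_left (abs_nonneg u)) hmax n).trans
        (pow_le_factorial_mul_exp (by norm_num) (by linarith) n)
    rw [Nat.add_sub_cancel]
    calc |u - a| * ((n + 1 : ℕ) : ℝ) * max |u| |a| ^ n ≤ b * ((n + 1 : ℕ) : ℝ) *
          (n.factorial * (5 / 4 : ℝ)⁻¹ ^ n * Real.exp (5 / 4 * (a + b))) := by gcongr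
      _ = _ := by
        rw [Nat.factorial_succ, pow_succ]
        push_cast
        rw [show (5 / 4 : ℝ)⁻¹ = 4 / 5 by norm_num]
        ring

theorem mul_exp_le_weight {x V A : ℝ} (h0 : 0 < x) (h1 : x < 1 / 2) (hV : 0 ≤ V) :
    x * V * Real.exp (5 / 4 * (|Real.log x + A| + x * V)) ≤
      8 * Real.exp (5 / 4 * |A|) * (Real.exp (-(3 / 4) * Real.log x) * Real.exp (3 / 4 * V)) := by
  have hlog := Real.log_nonpos h0.le (by linarith)
  have hV8 : V ≤ 8 * Real.exp (V / 8) := by linarith [Real.add_one_le_exp (V / 8)]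
  have habs : |Real.log x + A| ≤ -Real.log x + |A| := by
    simpa [abs_of_nonpos hlog] using abs_add_le (Real.log x) A
  have hxV : x * V ≤ V / 2 := by nlinarith
  calc x * V * Real.exp (5 / 4 * (|Real.log x + A| + x * V))
      ≤ Real.exp (Real.log x) * (8 * Real.exp (V / 8)) *
        Real.exp (5 / 4 * (-Real.log x + |A| + V / 2)) := by
        rw [Real.exp_log h0]
        gcongr
    _ = 8 * Real.exp (5 / 4 * |A| + (-(1 / 4) * Real.log x + 3 / 4 * V)) := by
        rw [show Real.exp (Real.log x) * (8 * Real.exp (V / 8)) *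
          Real.exp (5 / 4 * (-Real.log x + |A| + V / 2)) = 8 * (Real.exp (Real.log x) *
          Real.exp (V / 8) * Real.exp (5 / 4 * (-Real.log x + |A| + V / 2))) by ring,
          ← Real.exp_add, ← Real.exp_add]
        congr 2
        ring
    _ ≤ 8 * Real.exp (5 / 4 * |A| + (-(3 / 4) * Real.log x + 3 / 4 * V)) := by
        refine mul_le_mul_of_nonneg_left (Real.exp_le_exp.2 ?_) (by norm_num)
        linarith
    _ = _ := by
        rw [Real.exp_add, Real.exp_add]
        ring

theorem integrableOn_abs_pow {g : ℝ → ℝ}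
    (hg : ∀ᵐ x ∂(volume.restrict (Set.Ioo (0 : ℝ) 1)),
      Tendsto (fun N => sawSum N x) atTop (nhds (g x))) (K : ℕ) :
    IntegrableOn (fun x => |g x| ^ K) (Set.Ioo 0 1) := by
  have hm : AEMeasurable g (volume.restrict (Set.Ioo (0 : ℝ) 1)) :=
    aemeasurable_of_tendsto_metrizable_ae atTop (fun N => (measurable_sawSum N).aemeasurable) hg
  have hexp : IntegrableOn (fun x => Real.exp (3 / 4 * |g x|)) (Set.Ioo 0 1) := by
    refine (lintegral_ofReal_ne_top_iff_integrable
      (AEMeasurable.aestronglyMeasurable (by fun_prop))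
      (Eventually.of_forall fun x => (Real.exp_pos _).le)).1 (lintegral_exp_abs_lt_top hg).ne
  refine Integrable.mono' (hexp.const_mul (K.factorial * (3 / 4 : ℝ)⁻¹ ^ K))
    (AEMeasurable.aestronglyMeasurable (by fun_prop)) (Eventually.of_forall fun x => ?_)
  rw [Real.norm_of_nonneg (by positivity)]
  exact pow_le_factorial_mul_exp (by norm_num) (abs_nonneg _) K

theorem integrableOn_weight {g : ℝ → ℝ}
    (hg : ∀ᵐ x ∂(volume.restrict (Set.Ioo (0 : ℝ) 1)),
      Tendsto (fun N => sawSum N x) atTop (nhds (g x))) :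
    IntegrableOn (fun x => Real.exp (-(3 / 4) * Real.log x) *
      Real.exp (3 / 4 * |g (Int.fract x⁻¹)|)) (Set.Ioo 0 1) := by
  obtain ⟨D, hD, hgauss⟩ := exists_lintegral_comp_fract_inv_le
  have hm : AEMeasurable (fun x => g (Int.fract x⁻¹)) (volume.restrict (Set.Ioo (0 : ℝ) 1)) :=
    aemeasurable_of_tendsto_metrizable_ae atTop (fun N => ((measurable_sawSum N).comp
      (measurable_fract.comp measurable_inv)).aemeasurable) (ae_comp_fract_inv hg)
  have hm' : AEMeasurable (fun x => Real.exp (3 / 4 * |g (Int.fract x⁻¹)|))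
      (volume.restrict (Set.Ioo (0 : ℝ) 1)) :=
    Real.measurable_exp.comp_aemeasurable (hm.abs.const_mul (3 / 4))
  have hlog : Measurable fun x => Real.exp (-(3 / 4) * Real.log x) := by fun_prop
  refine (lintegral_ofReal_ne_top_iff_integrable
      (hlog.aemeasurable.mul hm').aestronglyMeasurable
      (Eventually.of_forall fun x => mul_nonneg (Real.exp_pos _).le (Real.exp_pos _).le)).1 (ne_top_of_le_ne_top
      (b := ENNReal.ofReal D *
        ∫⁻ y in Set.Ioo (0 : ℝ) 1, ENNReal.ofReal (Real.exp (3 / 4 * |g y|))) ?_ ?_)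
  · exact ENNReal.mul_ne_top ENNReal.ofReal_ne_top (lintegral_exp_abs_lt_top hg).ne
  · refine le_trans (le_of_eq ?_) (hgauss fun y => ENNReal.ofReal (Real.exp (3 / 4 * |g y|)))
    simp only [Pi.mul_apply, ENNReal.ofReal_mul (Real.exp_pos _).le]

theorem exists_abs_integral_half_sub_le {g : ℝ → ℝ}
    (hg : ∀ᵐ x ∂(volume.restrict (Set.Ioo (0 : ℝ) 1)),
      Tendsto (fun N => sawSum N x) atTop (nhds (g x))) :
    ∃ D : ℝ, ∀ K : ℕ, |(∫ x in Set.Ioo (0 : ℝ) (1 / 2), |g x| ^ K) -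
      ∫ x in Set.Ioo (0 : ℝ) (1 / 2), |Real.log x + Aconst| ^ K| ≤
        K.factorial * (4 / 5 : ℝ) ^ K * D := by
  have hsub : Set.Ioo (0 : ℝ) (1 / 2) ⊆ Set.Ioo 0 1 := Set.Ioo_subset_Ioo_right (by norm_num)
  set E : ℝ := 5 / 4 * (8 * Real.exp (5 / 4 * |Aconst|) * Real.exp (3 / 4 * 14)) with hE
  set w : ℝ → ℝ := fun x => E * (Real.exp (-(3 / 4) * Real.log x) *
      Real.exp (3 / 4 * |g (Int.fract x⁻¹)|)) with hw
  have hwi : IntegrableOn w (Set.Ioo 0 (1 / 2)) :=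
    ((integrableOn_weight hg).mono_set hsub).const_mul E
  refine ⟨∫ x in Set.Ioo (0 : ℝ) (1 / 2), w x, fun K => ?_⟩
  have hpt : ∀ᵐ x ∂(volume.restrict (Set.Ioo (0 : ℝ) (1 / 2))),
      ‖|g x| ^ K - |Real.log x + Aconst| ^ K‖ ≤ K.factorial * (4 / 5 : ℝ) ^ K * w x := by
    filter_upwards [ae_restrict_of_ae_restrict_of_subset hsub (ae_abs_add_log_add_le hg),
      ae_restrict_mem measurableSet_Ioo] with x hx hx01
    have h1 : |(|g x| - |Real.log x + Aconst|)| ≤ x * (14 + |g (Int.fract x⁻¹)|) := by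
      have := abs_abs_sub_abs_le_abs_sub (g x) (-(Real.log x + Aconst))
      rw [abs_neg, sub_neg_eq_add] at this
      exact this.trans hx
    refine (abs_pow_sub_pow_le_factorial (abs_nonneg _) (abs_nonneg _) h1 K).trans ?_
    have h2 := mul_exp_le_weight (A := Aconst) (V := 14 + |g (Int.fract x⁻¹)|) hx01.1 hx01.2
      (by positivity)
    rw [mul_add (3 / 4), Real.exp_add] at h2
    have h3 : w x = 5 / 4 * (8 * Real.exp (5 / 4 * |Aconst|) * (Real.exp (-(3 / 4) * Real.log x) *
        (Real.exp (3 / 4 * 14) * Real.exp (3 / 4 * |g (Int.fract x⁻¹)|)))) := by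
      simp only [hw, hE]
      ring
    rw [h3]
    gcongr
  have hi := hwi.const_mul (K.factorial * (4 / 5 : ℝ) ^ K)
  have hgi := (integrableOn_abs_pow hg K).mono_set hsub
  have hLm : AEStronglyMeasurable (fun x => |Real.log x + Aconst| ^ K)
      (volume.restrict (Set.Ioo (0 : ℝ) (1 / 2))) := by
    exact Measurable.aestronglyMeasurable (by fun_prop)
  have hdi : IntegrableOn (fun x => |g x| ^ K - |Real.log x + Aconst| ^ K) (Set.Ioo 0 (1 / 2)) :=
    Integrable.mono' hi (hgi.aestronglyMeasurable.sub hLm) hpt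
  have hLi : IntegrableOn (fun x => |Real.log x + Aconst| ^ K) (Set.Ioo 0 (1 / 2)) := by
    refine (hgi.sub hdi).congr (Eventually.of_forall fun x => ?_)
    simp
  rw [← integral_sub hgi hLi, ← integral_const_mul]
  exact norm_integral_le_of_norm_le hi hpt

theorem image_exp_neg_sub (A : ℝ) :
    (fun t => Real.exp (-A - t)) '' Set.Ioi (Real.log 2 - A) = Set.Ioo 0 (1 / 2) := by
  have h2 : Real.exp (-Real.log 2) = 1 / 2 := by
    rw [Real.exp_neg, Real.exp_log two_pos, one_div]
  ext x
  constructor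
  · rintro ⟨t, ht, rfl⟩
    have ht : Real.log 2 - A < t := ht
    refine ⟨Real.exp_pos _, ?_⟩
    rw [← h2]
    exact Real.exp_lt_exp.2 (by linarith)
  · rintro ⟨h0, h1⟩
    refine ⟨-A - Real.log x, ?_, ?_⟩
    · rw [← h2, ← Real.log_lt_iff_lt_exp h0] at h1
      show Real.log 2 - A < -A - Real.log x
      linarith
    · simp only [sub_sub_cancel, Real.exp_log h0]

theorem integral_abs_log_add_pow (A : ℝ) (K : ℕ) :
    ∫ x in Set.Ioo (0 : ℝ) (1 / 2), |Real.log x + A| ^ K =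
      Real.exp (-A) * ∫ t in Set.Ioi (Real.log 2 - A), Real.exp (-t) * |t| ^ K := by
  rw [← image_exp_neg_sub A, integral_image_eq_integral_abs_deriv_smul measurableSet_Ioi
    (f := fun t => Real.exp (-A - t)) (f' := fun t => Real.exp (-A - t) * -1)
    (fun t _ => ((hasDerivAt_id t).const_sub (-A)).exp.hasDerivWithinAt)
    (fun s _ t _ h => by simpa using h), ← integral_const_mul]
  refine integral_congr_ae (Eventually.of_forall fun t => ?_)
  simp only [Real.log_exp, mul_neg, mul_one, abs_neg, Real.abs_exp, smul_eq_mul]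
  rw [show -A - t + A = -t by ring, abs_neg, sub_eq_add_neg, Real.exp_add, mul_assoc]

theorem integrableOn_exp_neg_mul_abs_pow (K : ℕ) :
    IntegrableOn (fun t => Real.exp (-t) * |t| ^ K) (Set.Ioi 0) := by
  refine (Real.GammaIntegral_convergent (s := (K : ℝ) + 1) (by positivity)).congr_fun ?_
    measurableSet_Ioi
  intro t ht
  have ht : 0 < t := ht
  simp only [add_sub_cancel_right, Real.rpow_natCast, abs_of_pos ht]

theorem integral_exp_neg_mul_abs_pow (K : ℕ) :
    ∫ t in Set.Ioi (0 : ℝ), Real.exp (-t) * |t| ^ K = K.factorial := by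
  rw [← Real.Gamma_nat_eq_factorial, Real.Gamma_eq_integral (by positivity)]
  refine setIntegral_congr_fun measurableSet_Ioi fun t ht => ?_
  have ht : 0 < t := ht
  simp only [add_sub_cancel_right, Real.rpow_natCast, abs_of_pos ht]

theorem exists_abs_integral_log_sub_le (A : ℝ) :
    ∃ D : ℝ, ∀ K : ℕ, |(∫ x in Set.Ioo (0 : ℝ) (1 / 2), |Real.log x + A| ^ K) -
      Real.exp (-A) * K.factorial| ≤ K.factorial * (4 / 5 : ℝ) ^ K * D := by
  set a : ℝ := Real.log 2 - A
  refine ⟨Real.exp (-A) * (Real.exp |a| * Real.exp (5 / 4 * |a|) * |a|), fun K => ?_⟩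
  have hcont : Continuous fun t : ℝ => Real.exp (-t) * |t| ^ K := by fun_prop
  have hi0 := integrableOn_exp_neg_mul_abs_pow K
  have hia : IntegrableOn (fun t => Real.exp (-t) * |t| ^ K) (Set.Ioi a) := by
    refine ((hcont.integrableOn_Icc (a := a) (b := 0)).union hi0).mono_set fun t ht => ?_
    rcases le_or_gt t 0 with h | h
    · exact Or.inl ⟨(Set.mem_Ioi.1 ht).le, h⟩
    · exact Or.inr h
  rw [integral_abs_log_add_pow, ← integral_exp_neg_mul_abs_pow K, ← mul_sub,
    ← intervalIntegral.integral_interval_add_Ioi hia hi0, add_sub_cancel_right, abs_mul,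
    Real.abs_exp, integral_exp_neg_mul_abs_pow]
  have hb : ∀ t ∈ Set.uIoc a 0, ‖Real.exp (-t) * |t| ^ K‖ ≤
      Real.exp |a| * (K.factorial * (5 / 4 : ℝ)⁻¹ ^ K * Real.exp (5 / 4 * |a|)) := by
    intro t ht
    have hta : |t| ≤ |a| := by
      have := Set.abs_sub_right_of_mem_uIcc (Set.uIoc_subset_uIcc ht)
      simpa using this
    rw [Real.norm_of_nonneg (by positivity)]
    have h1 : Real.exp (-t) ≤ Real.exp |a| := Real.exp_le_exp.2 ((neg_le_abs t).trans hta)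
    have h2 : |t| ^ K ≤ K.factorial * (5 / 4 : ℝ)⁻¹ ^ K * Real.exp (5 / 4 * |a|) :=
      (pow_le_pow_left₀ (abs_nonneg t) hta K).trans
        (pow_le_factorial_mul_exp (by norm_num) (abs_nonneg a) K)
    gcongr
  have h := intervalIntegral.norm_integral_le_of_norm_le_const hb
  rw [Real.norm_eq_abs, zero_sub, abs_neg, show (5 / 4 : ℝ)⁻¹ = 4 / 5 by norm_num] at h
  refine (mul_le_mul_of_nonneg_left h (Real.exp_pos _).le).trans_eq ?_
  ring

theorem integral_eq_two_mul_integral_half {g : ℝ → ℝ}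
    (hg : ∀ᵐ x ∂(volume.restrict (Set.Ioo (0 : ℝ) 1)),
      Tendsto (fun N => sawSum N x) atTop (nhds (g x))) (K : ℕ) :
    ∫ x in Set.Ioo (0 : ℝ) 1, |g x| ^ K = 2 * ∫ x in Set.Ioo (0 : ℝ) (1 / 2), |g x| ^ K := by
  have hi : IntervalIntegrable (fun x => |g x| ^ K) volume 0 1 := by
    rw [intervalIntegrable_iff_integrableOn_Ioo_of_le zero_le_one]
    exact integrableOn_abs_pow hg K
  have hl : IntervalIntegrable (fun x => |g x| ^ K) volume 0 (1 / 2) :=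
    hi.mono_set (Set.uIcc_subset_uIcc_left (by rw [Set.uIcc_of_le] <;> norm_num))
  have hr : IntervalIntegrable (fun x => |g x| ^ K) volume (1 / 2) 1 :=
    hi.mono_set (Set.uIcc_subset_uIcc_right (by rw [Set.uIcc_of_le] <;> norm_num))
  have hrefl : ∫ x in (1 / 2 : ℝ)..1, |g x| ^ K = ∫ x in (0 : ℝ)..(1 / 2), |g x| ^ K := by
    have h := intervalIntegral.integral_comp_sub_left (a := 0) (b := 1 / 2)
      (fun x => |g x| ^ K) (1 : ℝ)
    rw [show (1 : ℝ) - 1 / 2 = 1 / 2 by norm_num, sub_zero] at h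
    rw [← h]
    refine intervalIntegral.integral_congr_ae ?_
    filter_upwards [ae_one_sub_eq_neg hg] with x hx hx'
    rw [Set.uIoc_of_le (by norm_num)] at hx'
    rw [hx ⟨hx'.1, by linarith [hx'.2]⟩, abs_neg]
  rw [← integral_Ioc_eq_integral_Ioo, ← integral_Ioc_eq_integral_Ioo,
    ← intervalIntegral.integral_of_le zero_le_one,
    ← intervalIntegral.integral_of_le (by norm_num : (0 : ℝ) ≤ 1 / 2),
    ← intervalIntegral.integral_add_adjacent_intervals hl hr, hrefl, two_mul]

/-- Main theorem: if `g` is (a.e. on `(0,1)`) the sum of `Σ_{l≥1}(1-2{lx})/l`, then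
there is an absolute constant `C > 0` with
`∫_0^1 |g|^K dx = 2 e^{-A} Γ(K+1)(1 + O(exp(-CK)))` as `K → ∞`. -/
theorem integral_abs_g_pow_asymptotic (g : ℝ → ℝ)
    (hg : ∀ᵐ x ∂(volume.restrict (Set.Ioo (0:ℝ) 1)),
      Tendsto (fun N => ∑ l ∈ Finset.range N,
          (1 - 2 * Int.fract (((l : ℝ) + 1) * x)) / ((l : ℝ) + 1))
        atTop (nhds (g x))) :
    ∃ C > (0:ℝ), ∃ c > (0:ℝ), ∀ K : ℕ,
      |(∫ x in Set.Ioo (0:ℝ) 1, |g x| ^ K) -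
          2 * Real.exp (-Aconst) * Real.Gamma (K + 1)| ≤
        2 * Real.exp (-Aconst) * Real.Gamma (K + 1) * (c * Real.exp (-C * K)) := by
  obtain ⟨D₁, h₁⟩ := exists_abs_integral_half_sub_le hg
  obtain ⟨D₂, h₂⟩ := exists_abs_integral_log_sub_le Aconst
  refine ⟨Real.log (5 / 4), Real.log_pos (by norm_num), Real.exp Aconst * (|D₁| + |D₂| + 1),
    by positivity, fun K => ?_⟩
  have hexp : Real.exp (-Real.log (5 / 4) * K) = (4 / 5 : ℝ) ^ K := by
    rw [← Real.log_inv, mul_comm, Real.exp_nat_mul, Real.exp_log (by norm_num)]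
    norm_num
  have hA : Real.exp (-Aconst) * Real.exp Aconst = 1 := by
    rw [← Real.exp_add, neg_add_cancel, Real.exp_zero]
  rw [Real.Gamma_nat_eq_factorial, integral_eq_two_mul_integral_half hg K, hexp]
  have hq : 0 < K.factorial * (4 / 5 : ℝ) ^ K := by positivity
  have e : 2 * Real.exp (-Aconst) * K.factorial *
      (Real.exp Aconst * (|D₁| + |D₂| + 1) * (4 / 5 : ℝ) ^ K) =
      2 * (K.factorial * (4 / 5 : ℝ) ^ K * (|D₁| + |D₂| + 1)) := by
    linear_combination 2 * K.factorial * (|D₁| + |D₂| + 1) * (4 / 5 : ℝ) ^ K * hA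
  have h := (abs_sub_le _ _ _).trans (add_le_add (h₁ K) (h₂ K))
  rw [e, mul_assoc, ← mul_sub, abs_mul, abs_two]
  refine mul_le_mul_of_nonneg_left (h.trans ?_) zero_le_two
  nlinarith [le_abs_self D₁, le_abs_self D₂]
end
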